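/- arXiv:2212.08835 — 2 statements merged into one kernel-verified Lean document; each statement's English description precedes it below -/
import Mathlib

section
/- Let β, γ ∈ (0,1) satisfy β + γ > 1, and set c(β,γ) := max{1/(1−β), 1/(1−γ), 1/(β+γ−1)}. Then ∫_{-1}^{∞} dξ / (|ξ|^{β} (ξ+1)^{γ}) ≤ 6·c(β,γ), and for every x ∈ (-1,1), ∫_{-1}^{1} dt / (|t−x|^{β} |1−t²|^{γ}) ≤ 24·c(β,γ) / (1−x²)^{β+γ−1}. -/
open MeasureTheory Set Filter

noncomputable section

/-- Lebesgue measure restricted to the interval `(-1, 1)`. -/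
def μI : Measure ℝ := volume.restrict (Set.Ioo (-1 : ℝ) 1)

/-- The finite Hilbert transform: the principal-value limit
`T(f)(t) = lim_{ε→0⁺} (1/π) ∫_{x∈(-1,1), |x-t|≥ε} f(x)/(x-t) dx`. -/
def FHT (f : ℝ → ℂ) (t : ℝ) : ℂ :=
  limUnder (nhdsWithin (0 : ℝ) (Set.Ioi 0)) fun ε : ℝ =>
    (Real.pi : ℂ)⁻¹ *
      ∫ x in {x : ℝ | x ∈ Set.Ioo (-1 : ℝ) 1 ∧ ε ≤ |x - t|}, f x / ((x : ℂ) - (t : ℂ))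

/-- The operator `T̂(g)(x) = -(1-x²)^{-1/2} T(t ↦ √(1-t²) g(t))(x)`. -/
def hatT (g : ℝ → ℂ) (x : ℝ) : ℂ :=
  -((Real.sqrt (1 - x ^ 2) : ℂ))⁻¹ * FHT (fun t => (Real.sqrt (1 - t ^ 2) : ℂ) * g t) x

/-- Membership in the Zygmund space `L log L(-1,1)`:
`f` is a.e. measurable on `(-1,1)` and `∫ |f| log⁺|f| < ∞`. -/
def MemLlogL (f : ℝ → ℂ) : Prop :=
  AEStronglyMeasurable f μI ∧
    IntegrableOn (fun x => ‖f x‖ * max (Real.log ‖f x‖) 0) (Set.Ioo (-1 : ℝ) 1)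

/-- The distribution function `λ ↦ |{x ∈ (-1,1) : |f(x)| > λ}|`. -/
def distFun (f : ℝ → ℂ) (lam : ℝ) : ℝ :=
  (volume {x : ℝ | x ∈ Set.Ioo (-1 : ℝ) 1 ∧ lam < ‖f x‖}).toReal

/-- The decreasing rearrangement `f*` of `f`, a function on `(0,2)`. -/
def decRearr (f : ℝ → ℂ) (t : ℝ) : ℝ :=
  sInf {lam : ℝ | 0 ≤ lam ∧ distFun f lam ≤ t}

/-- The `L log L` norm `‖f‖ = ∫_0^2 f*(t) log(2e/t) dt`. -/
def llogLNorm (f : ℝ → ℂ) : ℝ :=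
  ∫ t in Set.Ioo (0 : ℝ) 2, decRearr f t * Real.log (2 * Real.exp 1 / t)

/-- The `L(log L)^α` norm `∫_0^2 f*(t) log^α(2e/t) dt` (for `α = 0` this is the `L¹` norm). -/
def zygNorm (α : ℝ) (f : ℝ → ℂ) : ℝ :=
  ∫ t in Set.Ioo (0 : ℝ) 2, decRearr f t * Real.log (2 * Real.exp 1 / t) ^ α

/-- Membership in the Zygmund space `L(log L)^α(-1,1)`. -/
def MemZyg (α : ℝ) (f : ℝ → ℂ) : Prop :=
  AEStronglyMeasurable f μI ∧
    IntegrableOn (fun t => decRearr f t * Real.log (2 * Real.exp 1 / t) ^ α)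
      (Set.Ioo (0 : ℝ) 2)

/-- Membership in `L(log L)²(-1,1)`: `∫ |f| (log(2+|f|))² < ∞`. -/
def MemLlogL2 (f : ℝ → ℂ) : Prop :=
  AEStronglyMeasurable f μI ∧
    IntegrableOn (fun x => ‖f x‖ * Real.log (2 + ‖f x‖) ^ 2) (Set.Ioo (-1 : ℝ) 1)

/-- The constant `c(β,γ) = max{1/(1-β), 1/(1-γ), 1/(β+γ-1)}`. -/
def cBG (β γ : ℝ) : ℝ := max (max (1 / (1 - β)) (1 / (1 - γ))) (1 / (β + γ - 1))

theorem aux_affine (a b : ℝ) (ha : a ≠ 0) (S : Set ℝ) (hS : MeasurableSet S) (g : ℝ → ENNReal) :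
    ∫⁻ y in (fun t => a * t + b) '' S, g y = ENNReal.ofReal |a| * ∫⁻ t in S, g (a * t + b) := by
  rw [lintegral_image_eq_lintegral_abs_deriv_mul (f' := fun _ => a) hS, lintegral_const_mul']
  · exact ENNReal.ofReal_ne_top
  · intro x _
    have := ((hasDerivAt_id x).const_mul a).add_const b
    simpa using this.hasDerivWithinAt
  · intro x _ y _ h
    simpa [ha] using h

theorem aux_pow (p a : ℝ) (hp1 : p < 1) (ha : 0 < a) :
    ∫⁻ x in Ioc (0:ℝ) a, ENNReal.ofReal (x ^ (-p)) = ENNReal.ofReal (a ^ (1 - p) / (1 - p)) := by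
  have hi : IntervalIntegrable (fun x : ℝ => x ^ (-p)) volume 0 a :=
    intervalIntegral.intervalIntegrable_rpow' (by linarith)
  rw [← ofReal_integral_eq_lintegral_ofReal]
  · rw [← intervalIntegral.integral_of_le ha.le, integral_rpow (Or.inl (by linarith))]
    rw [Real.zero_rpow (by linarith)]
    congr 2
    · rw [sub_zero]; congr 1; ring
    · ring
  · exact (intervalIntegrable_iff_integrableOn_Ioc_of_le ha.le).1 hi
  · filter_upwards [ae_restrict_mem measurableSet_Ioc] with x hx
    exact Real.rpow_nonneg hx.1.le _

theorem aux_tail (p : ℝ) (hp : 1 < p) :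
    ∫⁻ x in Ioi (1:ℝ), ENNReal.ofReal (x ^ (-p)) = ENNReal.ofReal (1 / (p - 1)) := by
  rw [← ofReal_integral_eq_lintegral_ofReal]
  · rw [integral_Ioi_rpow_of_lt (by linarith) one_pos, Real.one_rpow]
    congr 1
    rw [show -p + 1 = -(p - 1) by ring, neg_div_neg_eq]
  · exact integrableOn_Ioi_rpow_of_lt (by linarith) one_pos
  · filter_upwards [ae_restrict_mem measurableSet_Ioi] with x hx
    exact Real.rpow_nonneg (by have : (1:ℝ) < x := hx; linarith) _

/-- comparison step -/
theorem aux_piece (S : Set ℝ) (hS : MeasurableSet S) (f g : ℝ → ℝ) (K A : ℝ) (hK : 0 ≤ K)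
    (h : ∀ x ∈ S, f x ≤ K * g x)
    (hg : ∫⁻ x in S, ENNReal.ofReal (g x) ≤ ENNReal.ofReal A) :
    ∫⁻ x in S, ENNReal.ofReal (f x) ≤ ENNReal.ofReal (K * A) := by
  calc ∫⁻ x in S, ENNReal.ofReal (f x)
      ≤ ∫⁻ x in S, ENNReal.ofReal K * ENNReal.ofReal (g x) := by
        apply setLIntegral_mono' hS
        intro x hx
        rw [← ENNReal.ofReal_mul hK]
        exact ENNReal.ofReal_le_ofReal (h x hx)
    _ = ENNReal.ofReal K * ∫⁻ x in S, ENNReal.ofReal (g x) :=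
        lintegral_const_mul' _ _ ENNReal.ofReal_ne_top
    _ ≤ _ := by
        rw [ENNReal.ofReal_mul hK]
        gcongr

theorem aux_inv (a p : ℝ) (ha : 0 ≤ a) : (a ^ p)⁻¹ = a ^ (-p) := (Real.rpow_neg ha p).symm

theorem aux_half (a p : ℝ) (ha : 1 / 2 ≤ a) (hp : 0 ≤ p) : a ^ (-p) ≤ 2 ^ p := by
  have h : (1/2 : ℝ) ^ p ≤ a ^ p := Real.rpow_le_rpow (by norm_num) ha hp
  rw [Real.rpow_neg (by linarith)]
  have h2 : (2:ℝ) ^ p = ((1/2 : ℝ) ^ p)⁻¹ := by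
    rw [one_div, Real.inv_rpow (by norm_num), inv_inv]
  rw [h2]
  exact inv_anti₀ (Real.rpow_pos_of_pos (by norm_num) _) h

theorem aux_const (p q c : ℝ) (hp : p < 1) (hq : q < 1) (hc : 1 / (1 - p) ≤ c) :
    2 ^ q * ((1/2 : ℝ) ^ (1 - p) / (1 - p)) ≤ 2 * c := by
  have h2 : (1/2 : ℝ) ^ (1 - p) = 2 ^ (p - 1) := by
    rw [one_div, Real.inv_rpow (by norm_num), ← Real.rpow_neg (by norm_num)]
    congr 1; ring
  have h3 : (2:ℝ) ^ q * 2 ^ (p - 1) ≤ 2 := by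
    rw [← Real.rpow_add (by norm_num)]
    calc (2:ℝ) ^ (q + (p - 1)) ≤ 2 ^ (1:ℝ) :=
          Real.rpow_le_rpow_of_exponent_le (by norm_num) (by linarith)
      _ = 2 := by simp
  rw [h2, ← mul_div_assoc, div_eq_mul_one_div]
  have : 0 < 1 / (1 - p) := by apply one_div_pos.2; linarith
  nlinarith [mul_le_mul h3 hc this.le (by norm_num)]

theorem aux_A (β γ c : ℝ) (hβ : β ∈ Ioo (0 : ℝ) 1) (hγ : γ ∈ Ioo (0 : ℝ) 1)
    (hβγ : 1 < β + γ) (c1 : 1 / (1 - β) ≤ c) (c2 : 1 / (1 - γ) ≤ c)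
    (c3 : 1 / (β + γ - 1) ≤ c) :
    ∫⁻ ξ in Ioi (-1 : ℝ), ENNReal.ofReal (1 / (|ξ| ^ β * (ξ + 1) ^ γ))
      ≤ ENNReal.ofReal (6 * c) := by
  obtain ⟨hβ0, hβ1⟩ := hβ
  obtain ⟨hγ0, hγ1⟩ := hγ
  have hc : 0 ≤ c := le_trans (one_div_nonneg.2 (by linarith)) c1
  have p1 : ∫⁻ ξ in Ioc (-1 : ℝ) (-1/2), ENNReal.ofReal (1 / (|ξ| ^ β * (ξ + 1) ^ γ))
      ≤ ENNReal.ofReal (2 * c) := by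
    refine le_trans (aux_piece _ measurableSet_Ioc _ (fun ξ => (ξ + 1) ^ (-γ)) (2 ^ β)
      ((1/2) ^ (1 - γ) / (1 - γ)) (by positivity) ?_ ?_)
      (ENNReal.ofReal_le_ofReal (aux_const γ β c hγ1 hβ1 c2))
    · rintro ξ ⟨h1, h2⟩
      rw [one_div, mul_inv, aux_inv _ _ (abs_nonneg _), aux_inv _ _ (by linarith)]
      apply mul_le_mul_of_nonneg_right
      · exact aux_half _ _ (by rw [abs_of_neg (by linarith)]; linarith) hβ0.le
      · exact Real.rpow_nonneg (by linarith) _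
    · have hh := aux_affine 1 1 one_ne_zero (Ioc (-1 : ℝ) (-1/2)) measurableSet_Ioc
        (fun x => ENNReal.ofReal (x ^ (-γ)))
      have him : (fun t : ℝ => 1 * t + 1) '' Ioc (-1 : ℝ) (-1/2) = Ioc 0 (1/2) := by
        simp only [one_mul, image_add_const_Ioc]; norm_num
      rw [him, aux_pow _ _ hγ1 (by norm_num)] at hh
      simp only [abs_one, ENNReal.ofReal_one, one_mul] at hh
      exact hh.ge
  have p2 : ∫⁻ ξ in Ico (-1/2 : ℝ) 0, ENNReal.ofReal (1 / (|ξ| ^ β * (ξ + 1) ^ γ))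
      ≤ ENNReal.ofReal (2 * c) := by
    refine le_trans (aux_piece _ measurableSet_Ico _ (fun ξ => (-ξ) ^ (-β)) (2 ^ γ)
      ((1/2) ^ (1 - β) / (1 - β)) (by positivity) ?_ ?_)
      (ENNReal.ofReal_le_ofReal (aux_const β γ c hβ1 hγ1 c1))
    · rintro ξ ⟨h1, h2⟩
      rw [one_div, mul_inv, aux_inv _ _ (abs_nonneg _), aux_inv _ _ (by linarith), mul_comm,
        abs_of_neg h2]
      apply mul_le_mul_of_nonneg_right
      · exact aux_half _ _ (by linarith) hγ0.le
      · exact Real.rpow_nonneg (by linarith) _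
    · have hh := aux_affine (-1) 0 (by norm_num) (Ico (-1/2 : ℝ) 0) measurableSet_Ico
        (fun x => ENNReal.ofReal (x ^ (-β)))
      have him : (fun t : ℝ => (-1) * t + 0) '' Ico (-1/2 : ℝ) 0 = Ioc 0 (1/2) := by
        simp only [neg_mul, one_mul, add_zero, image_neg_eq_neg, neg_Ico]; norm_num
      rw [him, aux_pow _ _ hβ1 (by norm_num)] at hh
      simp only [abs_neg, abs_one, ENNReal.ofReal_one, one_mul, neg_mul, add_zero] at hh
      exact hh.ge
  have p3 : ∫⁻ ξ in Ioc (0 : ℝ) 1, ENNReal.ofReal (1 / (|ξ| ^ β * (ξ + 1) ^ γ))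
      ≤ ENNReal.ofReal c := by
    refine le_trans (aux_piece _ measurableSet_Ioc _ (fun ξ => ξ ^ (-β)) 1
      (1 ^ (1 - β) / (1 - β)) (by positivity) ?_ (aux_pow _ _ hβ1 one_pos).le)
      (ENNReal.ofReal_le_ofReal (by simpa using c1))
    rintro ξ ⟨h1, h2⟩
    rw [one_div, mul_inv, aux_inv _ _ (abs_nonneg _), aux_inv _ _ (by linarith), mul_comm,
        abs_of_pos h1]
    apply mul_le_mul_of_nonneg_right
    · exact Real.rpow_le_one_of_one_le_of_nonpos (by linarith) (by linarith)
    · exact Real.rpow_nonneg (by linarith) _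
  have p4 : ∫⁻ ξ in Ioi (1 : ℝ), ENNReal.ofReal (1 / (|ξ| ^ β * (ξ + 1) ^ γ))
      ≤ ENNReal.ofReal c := by
    refine le_trans (aux_piece _ measurableSet_Ioi _ (fun ξ => ξ ^ (-(β + γ))) 1
      (1 / (β + γ - 1)) (by positivity) ?_ (aux_tail _ hβγ).le)
      (ENNReal.ofReal_le_ofReal (by simpa using c3))
    intro ξ h
    have h1 : (1:ℝ) < ξ := h
    rw [one_div, mul_inv, aux_inv _ _ (abs_nonneg _), aux_inv _ _ (by linarith),
        abs_of_pos (by linarith), one_mul, neg_add, Real.rpow_add (by linarith)]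
    apply mul_le_mul_of_nonneg_left
    · exact Real.rpow_le_rpow_of_nonpos (by linarith) (by linarith) (by linarith)
    · exact Real.rpow_nonneg (by linarith) _
  have hsub : Ioi (-1 : ℝ) ⊆ ((Ioc (-1 : ℝ) (-1/2) ∪ Ico (-1/2 : ℝ) 0) ∪ (Ioc (0 : ℝ) 1 ∪ Ioi 1))
      ∪ {0} := by
    intro x hx
    have : (-1:ℝ) < x := hx
    simp only [mem_union, mem_Ioc, mem_Ico, mem_Ioi, mem_singleton_iff]
    grind
  calc _ ≤ _ := lintegral_mono_set hsub
    _ ≤ _ := lintegral_union_le _ _ _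
    _ ≤ ((ENNReal.ofReal (2 * c) + ENNReal.ofReal (2 * c))
        + (ENNReal.ofReal c + ENNReal.ofReal c)) + 0 := by
      gcongr
      · refine (lintegral_union_le _ _ _).trans ?_
        gcongr
        · exact (lintegral_union_le _ _ _).trans (add_le_add p1 p2)
        · exact (lintegral_union_le _ _ _).trans (add_le_add p3 p4)
      · simp
    _ = _ := by
      rw [add_zero, ← ENNReal.ofReal_add (by positivity) (by positivity),
        ← ENNReal.ofReal_add (by positivity) (by positivity),
        ← ENNReal.ofReal_add (by positivity) (by positivity)]
      congr 1; ring

theorem aux_B (β γ c : ℝ) (hc : 0 ≤ c) (x : ℝ) (hx : x < 1)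
    (hA : ∫⁻ ξ in Ioi (-1 : ℝ), ENNReal.ofReal (1 / (|ξ| ^ β * (ξ + 1) ^ γ))
      ≤ ENNReal.ofReal (6 * c)) :
    ∫⁻ t in Iio (1 : ℝ), ENNReal.ofReal (1 / (|t - x| ^ β * (1 - t) ^ γ))
      ≤ ENNReal.ofReal (6 * c / (1 - x) ^ (β + γ - 1)) := by
  have hd : 0 < 1 - x := by linarith
  have hh := aux_affine (-(1 - x)) x (by linarith) (Ioi (-1 : ℝ)) measurableSet_Ioi
    (fun t => ENNReal.ofReal (1 / (|t - x| ^ β * (1 - t) ^ γ)))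
  have hsub : Iio (1 : ℝ) ⊆ (fun t : ℝ => -(1 - x) * t + x) '' Ioi (-1 : ℝ) := by
    intro t ht
    have ht : t < 1 := ht
    refine ⟨(x - t) / (1 - x), ?_, ?_⟩
    · show -1 < (x - t) / (1 - x)
      rw [lt_div_iff₀ hd]; linarith
    · simp only
      field_simp
      ring
  refine (lintegral_mono_set hsub).trans ?_
  rw [hh, abs_neg, abs_of_pos hd]
  have key : ∫⁻ ξ in Ioi (-1 : ℝ), ENNReal.ofReal
      (1 / (|-(1 - x) * ξ + x - x| ^ β * (1 - (-(1 - x) * ξ + x)) ^ γ)) ≤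
      ENNReal.ofReal ((1 - x) ^ (-(β + γ)) * (6 * c)) := by
    refine aux_piece _ measurableSet_Ioi _ (fun ξ => 1 / (|ξ| ^ β * (ξ + 1) ^ γ)) _ _
      (by positivity) ?_ hA
    intro ξ h
    have h : -1 < ξ := h
    apply le_of_eq
    rw [show -(1 - x) * ξ + x - x = -((1 - x) * ξ) by ring,
      show 1 - (-(1 - x) * ξ + x) = (1 - x) * (ξ + 1) by ring, abs_neg, abs_mul, abs_of_pos hd,
      Real.mul_rpow hd.le (abs_nonneg _), Real.mul_rpow hd.le (by linarith),
      Real.rpow_neg hd.le, Real.rpow_add hd]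
    simp only [one_div, mul_inv]
    ring
  calc _ ≤ ENNReal.ofReal (1 - x) * ENNReal.ofReal ((1 - x) ^ (-(β + γ)) * (6 * c)) := by
        gcongr
    _ = _ := by
        rw [← ENNReal.ofReal_mul hd.le]
        congr 1
        rw [div_eq_mul_inv, aux_inv _ _ hd.le, show -(β + γ - 1) = 1 + -(β + γ) by ring,
          Real.rpow_add hd, Real.rpow_one]
        ring

theorem aux_C (β γ c : ℝ) (hβ : β ∈ Ioo (0 : ℝ) 1) (hγ : γ ∈ Ioo (0 : ℝ) 1)
    (hβγ : 1 < β + γ) (hc : 0 ≤ c) (x : ℝ) (hx : x ∈ Ioo (-1 : ℝ) 1)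
    (hA : ∫⁻ ξ in Ioi (-1 : ℝ), ENNReal.ofReal (1 / (|ξ| ^ β * (ξ + 1) ^ γ))
      ≤ ENNReal.ofReal (6 * c)) :
    ∫⁻ t in Ico (0 : ℝ) 1, ENNReal.ofReal (1 / (|t - x| ^ β * |1 - t ^ 2| ^ γ))
      ≤ ENNReal.ofReal (12 * c / (1 - x ^ 2) ^ (β + γ - 1)) := by
  obtain ⟨hx0, hx1⟩ := hx
  have hd : 0 < 1 - x ^ 2 := by nlinarith
  have h1 : ∫⁻ t in Ico (0 : ℝ) 1, ENNReal.ofReal (1 / (|t - x| ^ β * |1 - t ^ 2| ^ γ))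
      ≤ ∫⁻ t in Ico (0 : ℝ) 1, ENNReal.ofReal (1 / (|t - x| ^ β * (1 - t) ^ γ)) := by
    apply setLIntegral_mono' measurableSet_Ico
    rintro t ⟨t0, t1⟩
    apply ENNReal.ofReal_le_ofReal
    simp only [one_div, mul_inv]
    apply mul_le_mul_of_nonneg_left
    · apply inv_anti₀ (Real.rpow_pos_of_pos (by linarith) _)
      apply Real.rpow_le_rpow (by linarith) _ hγ.1.le
      exact le_trans (by nlinarith) (le_abs_self _)
    · positivity
  refine h1.trans ((lintegral_mono_set (fun t ht => ht.2)).trans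
    ((aux_B β γ c hc x hx1 hA).trans (ENNReal.ofReal_le_ofReal ?_)))
  have hs : (1 - x ^ 2) ^ (β + γ - 1) ≤ 2 * (1 - x) ^ (β + γ - 1) := by
    calc (1 - x ^ 2) ^ (β + γ - 1) ≤ (2 * (1 - x)) ^ (β + γ - 1) :=
          Real.rpow_le_rpow hd.le (by nlinarith) (by linarith)
      _ = 2 ^ (β + γ - 1) * (1 - x) ^ (β + γ - 1) := Real.mul_rpow (by norm_num) (by linarith)
      _ ≤ 2 * (1 - x) ^ (β + γ - 1) := by
        apply mul_le_mul_of_nonneg_right _ (Real.rpow_nonneg (by linarith) _)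
        calc (2:ℝ) ^ (β + γ - 1) ≤ 2 ^ (1:ℝ) :=
              Real.rpow_le_rpow_of_exponent_le (by norm_num) (by linarith [hβ.2, hγ.2])
          _ = 2 := by simp
  have e1 : 0 < (1 - x) ^ (β + γ - 1) := Real.rpow_pos_of_pos (by linarith) _
  have e2 : 0 < (1 - x ^ 2) ^ (β + γ - 1) := Real.rpow_pos_of_pos hd _
  rw [div_le_div_iff₀ e1 e2]
  nlinarith

/-- Lemma on the auxiliary integrals: for `β, γ ∈ (0,1)` with `β + γ > 1`,
`∫_{-1}^∞ dξ/(|ξ|^β (ξ+1)^γ) ≤ 6 c(β,γ)` and for `x ∈ (-1,1)`,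
`∫_{-1}^1 dt/(|t-x|^β |1-t²|^γ) ≤ 24 c(β,γ)/(1-x²)^{β+γ-1}`. -/
theorem integral_bounds (β γ : ℝ) (hβ : β ∈ Set.Ioo (0 : ℝ) 1) (hγ : γ ∈ Set.Ioo (0 : ℝ) 1)
    (hβγ : 1 < β + γ) :
    (∫⁻ ξ in Set.Ioi (-1 : ℝ), ENNReal.ofReal (1 / (|ξ| ^ β * (ξ + 1) ^ γ))
      ≤ ENNReal.ofReal (6 * cBG β γ)) ∧
    ∀ x ∈ Set.Ioo (-1 : ℝ) 1,
      ∫⁻ t in Set.Ioo (-1 : ℝ) 1, ENNReal.ofReal (1 / (|t - x| ^ β * |1 - t ^ 2| ^ γ))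
        ≤ ENNReal.ofReal (24 * cBG β γ / (1 - x ^ 2) ^ (β + γ - 1)) := by
  have c1 : 1 / (1 - β) ≤ cBG β γ := (le_max_left _ _).trans (le_max_left _ _)
  have c2 : 1 / (1 - γ) ≤ cBG β γ := (le_max_right _ _).trans (le_max_left _ _)
  have c3 : 1 / (β + γ - 1) ≤ cBG β γ := le_max_right _ _
  have hc : 0 ≤ cBG β γ := le_trans (one_div_nonneg.2 (by linarith [hβ.2])) c1
  have hA := aux_A β γ (cBG β γ) hβ hγ hβγ c1 c2 c3
  refine ⟨hA, fun x hx => ?_⟩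
  have hC1 := aux_C β γ (cBG β γ) hβ hγ hβγ hc x hx hA
  have hC2 := aux_C β γ (cBG β γ) hβ hγ hβγ hc (-x) ⟨by linarith [hx.2], by linarith [hx.1]⟩ hA
  have hh := aux_affine (-1) 0 (by norm_num) (Ico (0 : ℝ) 1) measurableSet_Ico
    (fun t => ENNReal.ofReal (1 / (|t - x| ^ β * |1 - t ^ 2| ^ γ)))
  have him : (fun t : ℝ => (-1) * t + 0) '' Ico (0 : ℝ) 1 = Ioc (-1) 0 := by
    simp only [neg_mul, one_mul, add_zero, image_neg_eq_neg, neg_Ico]; norm_num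
  have he : ∀ t : ℝ, |-t - x| = |t - -x| := fun t => by
    rw [← abs_neg]; congr 1; ring
  rw [him] at hh
  simp only [abs_neg, abs_one, ENNReal.ofReal_one, one_mul, neg_mul, add_zero, he, neg_sq] at hh
  rw [neg_sq, ← hh] at hC2
  have hd : 0 < 1 - x ^ 2 := by nlinarith [hx.1, hx.2]
  have e2 : 0 < (1 - x ^ 2) ^ (β + γ - 1) := Real.rpow_pos_of_pos hd _
  have hsub : Ioo (-1 : ℝ) 1 ⊆ Ioc (-1) 0 ∪ Ico 0 1 := by
    rintro t ⟨h1, h2⟩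
    rcases le_total t 0 with h | h
    · exact Or.inl ⟨h1, h⟩
    · exact Or.inr ⟨h, h2⟩
  refine (lintegral_mono_set hsub).trans ((lintegral_union_le _ _ _).trans
    ((add_le_add hC2 hC1).trans (le_of_eq ?_)))
  rw [← ENNReal.ofReal_add (by positivity) (by positivity)]
  congr 1; ring
end
end

section
/- Let g ∈ LlogL(-1,1). Then T̂(g) ∈ L^1(-1,1), T(T̂(g)) = g almost everywhere in (-1,1), and moreover ∫_{-1}^1 T̂(g)(x) dx = 0. -/
open MeasureTheory Set Filter

noncomputable section

namespace HS
open Polynomial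

def ev (A : ℝ[X]) (θ : ℝ) : ℂ := aeval (Complex.exp (θ * Complex.I)) A

lemma ev_add (A B : ℝ[X]) (θ : ℝ) : ev (A + B) θ = ev A θ + ev B θ := by simp [ev]
lemma ev_sub (A B : ℝ[X]) (θ : ℝ) : ev (A - B) θ = ev A θ - ev B θ := by simp [ev]
lemma ev_mul (A B : ℝ[X]) (θ : ℝ) : ev (A * B) θ = ev A θ * ev B θ := by simp [ev]
lemma ev_smul (c : ℝ) (B : ℝ[X]) (θ : ℝ) : ev (c • B) θ = c * ev B θ := by simp [ev]
lemma ev_X_pow (n : ℕ) (θ : ℝ) : ev (X ^ n) θ = Complex.exp ((n * θ : ℝ) * Complex.I) := by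
  simp [ev, ← Complex.exp_nat_mul, mul_assoc]
lemma ev_X_pow_re (n : ℕ) (θ : ℝ) : (ev (X ^ n) θ).re = Real.cos (n * θ) := by
  rw [ev_X_pow, Complex.exp_ofReal_mul_I_re]
lemma ev_X_pow_im (n : ℕ) (θ : ℝ) : (ev (X ^ n) θ).im = Real.sin (n * θ) := by
  rw [ev_X_pow, Complex.exp_ofReal_mul_I_im]

lemma ev_cont (A : ℝ[X]) : Continuous (ev A) := by
  unfold ev
  exact (Polynomial.continuous_aeval A).comp (by fun_prop)

lemma ev_conj (A : ℝ[X]) (θ : ℝ) : ev A (2 * Real.pi - θ) = (starRingEnd ℂ) (ev A θ) := by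
  unfold ev
  have h : Complex.exp (((2 * Real.pi - θ : ℝ) : ℂ) * Complex.I)
      = (starRingEnd ℂ) (Complex.exp (θ * Complex.I)) := by
    rw [← Complex.exp_conj]
    simp only [map_mul, Complex.conj_ofReal, Complex.conj_I]
    rw [Complex.exp_eq_exp_iff_exists_int]
    exact ⟨1, by push_cast; ring⟩
  rw [h]
  exact (Polynomial.aeval_algHom_apply (Complex.conjAe.toAlgHom) _ A)

lemma mean_ev {Φ : ℂ → ℂ} (hΦ : Differentiable ℂ Φ) (A : ℝ[X]) :
    ∫ θ in (0:ℝ)..(2 * Real.pi), Φ (ev A θ) = 2 * Real.pi * Φ (A.coeff 0) := by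
  have hd : Differentiable ℂ (fun z : ℂ => Φ (aeval z A)) :=
    hΦ.comp (Polynomial.differentiable_aeval A)
  have h := DiffContOnCl.circleAverage (f := fun z : ℂ => Φ (aeval z A)) (c := 0) (R := 1)
    hd.diffContOnCl
  rw [Real.circleAverage_def] at h
  simp only [circleMap, Complex.ofReal_one, one_mul, zero_add] at h
  have h0 : aeval (0:ℂ) A = (A.coeff 0 : ℂ) := by
    rw [← Polynomial.coeff_zero_eq_aeval_zero' ]; rfl
  rw [h0] at h
  unfold ev
  rw [← h]
  have : (Real.pi : ℂ) ≠ 0 := by exact_mod_cast Real.pi_ne_zero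
  rw [Complex.real_smul]
  generalize (∫ θ in (0:ℝ)..(2 * Real.pi), Φ (aeval (Complex.exp (θ * Complex.I)) A)) = J
  push_cast
  field_simp

lemma fold_ev {E : Type*} [NormedAddCommGroup E] [NormedSpace ℝ E] {f : ℂ → E} (hf : Continuous f)
    (A : ℝ[X]) :
    ∫ θ in (0:ℝ)..(2 * Real.pi), f (ev A θ) =
      ∫ θ in (0:ℝ)..Real.pi, (f (ev A θ) + f ((starRingEnd ℂ) (ev A θ))) := by
  have hc : Continuous fun θ => f (ev A θ) := hf.comp (ev_cont A)
  have hc' : Continuous fun θ => f ((starRingEnd ℂ) (ev A θ)) :=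
    hf.comp (Complex.continuous_conj.comp (ev_cont A))
  rw [intervalIntegral.integral_add (hc.intervalIntegrable _ _) (hc'.intervalIntegrable _ _),
    ← intervalIntegral.integral_add_adjacent_intervals (b := Real.pi)
      (hc.intervalIntegrable _ _) (hc.intervalIntegrable _ _)]
  congr 1
  simp_rw [← ev_conj]
  rw [intervalIntegral.integral_comp_sub_left (fun θ => f (ev A θ))]
  congr 1 <;> ring

lemma pairing (B : ℝ[X]) (hB : B.coeff 0 = 0) :
    ∫ θ in (0:ℝ)..Real.pi, (ev B θ).re = 0 := by
  have h1 := mean_ev differentiable_id B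
  have h2 := fold_ev continuous_id B
  simp only [id] at h1 h2
  rw [h1, hB] at h2
  simp only [Complex.add_conj] at h2
  have h3 : ∫ θ in (0:ℝ)..Real.pi, ((2 * (ev B θ).re : ℝ) : ℂ) = 0 := by
    rw [← h2]; simp
  rw [intervalIntegral.integral_ofReal] at h3
  have h4 : ∫ θ in (0:ℝ)..Real.pi, (2 * (ev B θ).re) = 0 := by exact_mod_cast h3
  rw [intervalIntegral.integral_const_mul] at h4
  linarith

lemma expint (A : ℝ[X]) (hA : ∀ θ, |(ev A θ).re| ≤ 1) :
    ∫ θ in (0:ℝ)..Real.pi, Real.exp |(ev A θ).im| ≤ 4 * Real.pi := by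
  have hd : Differentiable ℂ (fun z : ℂ => Complex.exp (-Complex.I * z)) := by fun_prop
  have h1 := mean_ev hd A
  have hre : ∀ z : ℂ, (Complex.exp (-Complex.I * z)).re = Real.exp z.im * Real.cos z.re := by
    intro z; rw [Complex.exp_re]; simp
  have h2 : ∫ θ in (0:ℝ)..(2 * Real.pi), Real.exp (ev A θ).im * Real.cos (ev A θ).re
      = 2 * Real.pi * Real.cos (A.coeff 0) := by
    have := congrArg Complex.re h1
    rw [← Complex.reCLM_apply, ← ContinuousLinearMap.intervalIntegral_comp_comm] at this
    · simp only [Complex.reCLM_apply, hre] at this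
      rw [this]
      have h5 : (2 * (Real.pi : ℂ)) = ((2 * Real.pi : ℝ) : ℂ) := by push_cast; ring
      rw [h5, Complex.re_ofReal_mul, hre]; simp
    · exact (hd.continuous.comp (ev_cont A)).intervalIntegrable _ _
  have hcim : Continuous fun θ => (ev A θ).im := Complex.continuous_im.comp (ev_cont A)
  have hcre : Continuous fun θ => (ev A θ).re := Complex.continuous_re.comp (ev_cont A)
  have h3 : ∫ θ in (0:ℝ)..(2 * Real.pi), Real.exp (ev A θ).im ≤
      ∫ θ in (0:ℝ)..(2 * Real.pi), 2 * (Real.exp (ev A θ).im * Real.cos (ev A θ).re) := by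
    apply intervalIntegral.integral_mono (by positivity)
    · exact (Continuous.intervalIntegrable (by fun_prop) _ _)
    · exact (Continuous.intervalIntegrable (by fun_prop) _ _)
    · intro θ
      have := hA θ
      have h6 : (1/2 : ℝ) ≤ Real.cos (ev A θ).re := by
        rw [← Real.cos_abs, ← Real.cos_pi_div_three]
        apply Real.cos_le_cos_of_nonneg_of_le_pi (abs_nonneg _)
        · linarith [Real.pi_pos]
        · linarith [Real.pi_gt_three]
      have := Real.exp_pos (ev A θ).im
      simp only
      nlinarith
  rw [intervalIntegral.integral_const_mul, h2] at h3
  have h4 := fold_ev (f := fun z => Real.exp z.im) (by fun_prop) A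
  simp only [Complex.conj_im] at h4
  rw [h4] at h3
  have h7 : ∫ θ in (0:ℝ)..Real.pi, Real.exp |(ev A θ).im| ≤
      ∫ θ in (0:ℝ)..Real.pi, (Real.exp (ev A θ).im + Real.exp (-(ev A θ).im)) := by
    apply intervalIntegral.integral_mono Real.pi_pos.le
    · exact (Continuous.intervalIntegrable (by fun_prop) _ _)
    · exact (Continuous.intervalIntegrable (by fun_prop) _ _)
    · intro θ
      have := Real.exp_pos (ev A θ).im
      have := Real.exp_pos (-(ev A θ).im)
      rcases abs_cases (ev A θ).im with h | h <;> simp only [h.1] <;> linarith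
  have := Real.cos_le_one (A.coeff 0)
  nlinarith [Real.pi_pos]

lemma cosrep (p : ℝ[X]) : ∃ A : ℝ[X], ∀ θ : ℝ, (ev A θ).re = p.eval (Real.cos θ) := by
  let S : Submodule ℝ (ℝ → ℝ) := Submodule.span ℝ (range fun (n : ℕ) (θ : ℝ) => Real.cos (n * θ))
  have hS : ∀ f ∈ S, (fun θ => Real.cos θ * f θ) ∈ S := by
    intro f hf
    induction hf using Submodule.span_induction with
    | mem f hf =>
      obtain ⟨n, rfl⟩ := hf
      have e : (fun θ => Real.cos θ * Real.cos (n * θ)) =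
          (1/2 : ℝ) • ((fun θ => Real.cos ((n+1 : ℕ) * θ)) + (fun θ => Real.cos ((((n:ℤ)-1).natAbs : ℕ) * θ))) := by
        ext θ
        simp only [Pi.smul_apply, Pi.add_apply, smul_eq_mul]
        have h1 : Real.cos ((((n:ℤ)-1).natAbs : ℕ) * θ) = Real.cos ((n - 1) * θ) := by
          rw [Nat.cast_natAbs]
          push_cast
          rcases abs_cases ((n:ℝ)-1) with h | h <;> rw [h.1]
          rw [← Real.cos_neg]; congr 1; ring
        rw [h1]
        push_cast
        rw [add_mul, sub_mul, one_mul, Real.cos_add, Real.cos_sub]; ring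
      simp only
      rw [e]
      exact S.smul_mem _ (S.add_mem (Submodule.subset_span ⟨n+1, rfl⟩) (Submodule.subset_span ⟨_, rfl⟩))
    | zero => convert S.zero_mem using 1; ext θ; simp
    | add f g _ _ h1 h2 =>
      have := S.add_mem h1 h2
      convert this using 1; ext θ; simp [mul_add]
    | smul c f _ h =>
      have := S.smul_mem c h
      convert this using 1; ext θ; simp; ring
  have h1 : (fun θ => p.eval (Real.cos θ)) ∈ S := by
    induction p using Polynomial.induction_on' with
    | add p q hp hq => convert S.add_mem hp hq using 1; ext θ; simp
    | monomial n a =>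
      induction n with
      | zero =>
        convert S.smul_mem a (Submodule.subset_span ⟨0, rfl⟩) using 1; ext θ; simp
      | succ n ih => convert hS _ ih using 1; ext θ; simp; ring
  have h2 : ∀ f ∈ S, ∃ A : ℝ[X], ∀ θ : ℝ, (ev A θ).re = f θ := by
    intro f hf
    induction hf using Submodule.span_induction with
    | mem f hf => obtain ⟨n, rfl⟩ := hf; exact ⟨X ^ n, fun θ => ev_X_pow_re n θ⟩
    | zero => exact ⟨0, fun θ => by simp [ev]⟩
    | add f g _ _ h1 h2 =>
      obtain ⟨A, hA⟩ := h1; obtain ⟨B, hB⟩ := h2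
      exact ⟨A + B, fun θ => by simp [ev_add, hA, hB]⟩
    | smul c f _ h =>
      obtain ⟨A, hA⟩ := h
      exact ⟨c • A, fun θ => by simp [ev_smul, hA]⟩
  exact h2 _ h1

lemma sinrep (p : ℝ[X]) : ∃ A : ℝ[X], A.coeff 0 = 0 ∧
    ∀ θ : ℝ, (ev A θ).im = Real.sin θ * p.eval (Real.cos θ) := by
  let S : Submodule ℝ (ℝ → ℝ) := Submodule.span ℝ (range fun (n : ℕ) (θ : ℝ) => Real.sin ((n + 1) * θ))
  have hS : ∀ f ∈ S, (fun θ => Real.cos θ * f θ) ∈ S := by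
    intro f hf
    induction hf using Submodule.span_induction with
    | mem f hf =>
      obtain ⟨n, rfl⟩ := hf
      rcases n with _ | n
      · have e : (fun θ => Real.cos θ * Real.sin (((0:ℕ) + 1) * θ)) =
          (1/2 : ℝ) • ((fun θ => Real.sin (((1 : ℕ) + 1) * θ))) := by
          ext θ
          simp only [Pi.smul_apply, smul_eq_mul]
          push_cast
          norm_num [Real.sin_two_mul]; ring
        simp only
        rw [e]
        exact S.smul_mem _ (Submodule.subset_span ⟨_, rfl⟩)
      · have e : (fun θ => Real.cos θ * Real.sin (((n+1:ℕ) + 1) * θ)) =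
          (1/2 : ℝ) • ((fun θ => Real.sin (((n+2 : ℕ) + 1) * θ)) + (fun θ => Real.sin (((n : ℕ) + 1) * θ))) := by
          ext θ
          simp only [Pi.smul_apply, Pi.add_apply, smul_eq_mul]
          push_cast
          have e1 : ((n:ℝ) + 2 + 1) * θ = (n + 1 + 1) * θ + θ := by ring
          have e2 : ((n:ℝ) + 1) * θ = (n + 1 + 1) * θ - θ := by ring
          rw [e1, e2, Real.sin_add, Real.sin_sub]; ring
        simp only
        rw [e]
        exact S.smul_mem _ (S.add_mem (Submodule.subset_span ⟨_, rfl⟩) (Submodule.subset_span ⟨_, rfl⟩))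
    | zero => convert S.zero_mem using 1; ext θ; simp
    | add f g _ _ h1 h2 =>
      have := S.add_mem h1 h2
      convert this using 1; ext θ; simp [mul_add]
    | smul c f _ h =>
      have := S.smul_mem c h
      convert this using 1; ext θ; simp; ring
  have h1 : (fun θ => Real.sin θ * p.eval (Real.cos θ)) ∈ S := by
    induction p using Polynomial.induction_on' with
    | add p q hp hq => convert S.add_mem hp hq using 1; ext θ; simp; ring
    | monomial n a =>
      induction n with
      | zero =>
        convert S.smul_mem a (Submodule.subset_span ⟨0, rfl⟩) using 1; ext θ; simp; ring
      | succ n ih => convert hS _ ih using 1; ext θ; simp; ring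
  have h2 : ∀ f ∈ S, ∃ A : ℝ[X], A.coeff 0 = 0 ∧ ∀ θ : ℝ, (ev A θ).im = f θ := by
    intro f hf
    induction hf using Submodule.span_induction with
    | mem f hf =>
      obtain ⟨n, rfl⟩ := hf
      exact ⟨X ^ (n+1), by simp, fun θ => by rw [ev_X_pow_im]; push_cast; rfl⟩
    | zero => exact ⟨0, by simp, fun θ => by simp [ev]⟩
    | add f g _ _ h1 h2 =>
      obtain ⟨A, hA0, hA⟩ := h1; obtain ⟨B, hB0, hB⟩ := h2
      exact ⟨A + B, by simp [hA0, hB0], fun θ => by simp [ev_add, hA, hB]⟩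
    | smul c f _ h =>
      obtain ⟨A, hA0, hA⟩ := h
      exact ⟨c • A, by simp [hA0], fun θ => by simp [ev_smul, hA]⟩
  exact h2 _ h1

end HS

namespace HS
open Polynomial

lemma young {a b : ℝ} (ha : 0 ≤ a) (hb : 0 ≤ b) : a * b ≤ Real.exp b + a * Real.posLog a := by
  rcases le_or_gt a 1 with h | h
  · have := Real.add_one_le_exp b
    have := mul_nonneg ha (Real.posLog_nonneg (x := a))
    nlinarith
  · have h0 : 0 < a := by linarith
    have := Real.add_one_le_exp (b - Real.log a)
    rw [Real.exp_sub, Real.exp_log h0, le_div_iff₀ h0] at this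
    rw [Real.posLog_eq_log (by rw [abs_of_pos h0]; exact h.le)]
    nlinarith

lemma zyg (F : ℝ[X]) (hF : F.coeff 0 = 0) {K : ℝ} (hK : 0 < K) :
    ∫ θ in (0:ℝ)..Real.pi, |(ev F θ).re| ≤
      4 * Real.pi / K + ∫ θ in (0:ℝ)..Real.pi, |(ev F θ).im| * Real.posLog (K * |(ev F θ).im|) := by
  have hpi := Real.pi_pos
  have hcim : ∀ A : ℝ[X], Continuous fun θ => (ev A θ).im :=
    fun A => Complex.continuous_im.comp (ev_cont A)
  have hcre : ∀ A : ℝ[X], Continuous fun θ => (ev A θ).re :=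
    fun A => Complex.continuous_re.comp (ev_cont A)
  have hF1 := hcim F
  have hF2 := hcre F
  set V := ∫ θ in (0:ℝ)..Real.pi, |(ev F θ).re| with hV
  have hV0 : 0 ≤ V := intervalIntegral.integral_nonneg hpi.le (fun _ _ => abs_nonneg _)
  set Bd := 4 * Real.pi / K + ∫ θ in (0:ℝ)..Real.pi, |(ev F θ).im| * Real.posLog (K * |(ev F θ).im|)
  have key : ∀ δ : ℝ, 0 < δ → δ < 1 → V ≤ Bd + δ * (Real.pi + 2 * V) := by
    intro δ hδ hδ1
    let q : ℝ → ℝ := fun t => (ev F (Real.arccos t)).re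
    have hq : Continuous q := hF2.comp Real.continuous_arccos
    let s : ℝ → ℝ := fun t => (1 - δ) * (q t / (|q t| + δ))
    have hden : ∀ t, 0 < |q t| + δ := fun t => by positivity
    have hs : Continuous s := by
      refine continuous_const.mul (hq.div (by fun_prop) (fun t => (hden t).ne'))
    obtain ⟨f, hf⟩ := exists_polynomial_near_of_continuousOn (-1) 1 s hs.continuousOn δ hδ
    obtain ⟨A, hA⟩ := cosrep f
    have hmem : ∀ θ : ℝ, Real.cos θ ∈ Icc (-1:ℝ) 1 :=
      fun θ => ⟨Real.neg_one_le_cos θ, Real.cos_le_one θ⟩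
    have hA1 : ∀ θ, |(ev A θ).re| ≤ 1 := by
      intro θ
      rw [hA]
      have h1 := hf _ (hmem θ)
      have h2 : |s (Real.cos θ)| ≤ 1 - δ := by
        simp only [s]
        rw [abs_mul, abs_of_pos (by linarith : 0 < 1 - δ), abs_div, abs_of_pos (hden _)]
        have : |q (Real.cos θ)| / (|q (Real.cos θ)| + δ) ≤ 1 := by
          rw [div_le_one (hden _)]; linarith
        nlinarith
      rw [abs_lt] at h1
      rw [abs_le] at h2 ⊢
      constructor <;> linarith [h1.1, h1.2, h2.1, h2.2]
    have hE := expint A hA1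
    have hP := pairing (F * A) (by simp [hF])
    simp only [ev_mul, Complex.mul_re] at hP
    have hA2 := hcim A
    have hA3 := hcre A
    rw [intervalIntegral.integral_sub (Continuous.intervalIntegrable (by fun_prop) _ _)
      (Continuous.intervalIntegrable (by fun_prop) _ _)] at hP
    have h1 : V - δ * (Real.pi + 2 * V) ≤ ∫ θ in (0:ℝ)..Real.pi, (ev F θ).re * (ev A θ).re := by
      have e : V - δ * (Real.pi + 2 * V) =
          ∫ θ in (0:ℝ)..Real.pi, ((1 - 2 * δ) * |(ev F θ).re| - δ) := by
        rw [intervalIntegral.integral_sub (Continuous.intervalIntegrable (by fun_prop) _ _)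
          (Continuous.intervalIntegrable (by fun_prop) _ _), intervalIntegral.integral_const_mul]
        simp only [intervalIntegral.integral_const, smul_eq_mul, ← hV]; ring
      rw [e]
      apply intervalIntegral.integral_mono_on hpi.le
      · exact (Continuous.intervalIntegrable (by fun_prop) _ _)
      · exact (Continuous.intervalIntegrable (by fun_prop) _ _)
      · intro θ hθ
        rw [hA]
        have h1 := hf _ (hmem θ)
        have hqq : q (Real.cos θ) = (ev F θ).re := by
          simp only [q]; rw [Real.arccos_cos hθ.1 hθ.2]
        simp only [s, hqq] at h1
        set v := (ev F θ).re
        set y := eval (Real.cos θ) f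
        have hd : 0 < |v| + δ := by positivity
        have h3 : v * (v / (|v| + δ)) ≥ |v| - δ := by
          rw [← mul_div_assoc, ge_iff_le, le_div_iff₀ hd]
          nlinarith [abs_mul_abs_self v]
        have h4 : |v * (y - (1 - δ) * (v / (|v| + δ)))| ≤ |v| * δ := by
          rw [abs_mul]; exact mul_le_mul_of_nonneg_left h1.le (abs_nonneg _)
        rw [abs_le] at h4
        nlinarith [h4.1, abs_nonneg v]
    have h2 : ∫ θ in (0:ℝ)..Real.pi, (ev F θ).im * (ev A θ).im ≤ Bd := by
      have h3 : ∫ θ in (0:ℝ)..Real.pi, (ev F θ).im * (ev A θ).im ≤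
          ∫ θ in (0:ℝ)..Real.pi, ((1 / K) * Real.exp |(ev A θ).im| +
            |(ev F θ).im| * Real.posLog (K * |(ev F θ).im|)) := by
        apply intervalIntegral.integral_mono hpi.le
        · exact (Continuous.intervalIntegrable (by fun_prop) _ _)
        · exact (Continuous.intervalIntegrable (by fun_prop) _ _)
        · intro θ
          simp only
          set a := (ev F θ).im
          set b := (ev A θ).im
          have h5 := young (a := K * |a|) (b := |b|) (by positivity) (by positivity)
          have h6 : a * b ≤ |a| * |b| := by rw [← abs_mul]; exact le_abs_self _
          have h7 : |a| * |b| = (1 / K) * (K * |a| * |b|) := by field_simp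
          have h8 : (1 / K) * (Real.exp |b| + K * |a| * Real.posLog (K * |a|)) =
            1 / K * Real.exp |b| + |a| * Real.posLog (K * |a|) := by field_simp
          rw [← h8]
          exact h6.trans (h7.le.trans (mul_le_mul_of_nonneg_left h5 (by positivity)))
      rw [intervalIntegral.integral_add (Continuous.intervalIntegrable (by fun_prop) _ _)
        (Continuous.intervalIntegrable (by fun_prop) _ _), intervalIntegral.integral_const_mul] at h3
      have : 1 / K * ∫ θ in (0:ℝ)..Real.pi, Real.exp |(ev A θ).im| ≤ 4 * Real.pi / K := by
        calc _ ≤ 1 / K * (4 * Real.pi) := mul_le_mul_of_nonneg_left hE (by positivity)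
          _ = _ := by ring
      simp only [Bd]; linarith
    linarith
  by_contra! hcon
  set c := V - Bd
  have hc : 0 < c := by simp only [c]; linarith
  have hD : 0 < Real.pi + 2 * V := by positivity
  have h := key (min (1/2) (c / (2 * (Real.pi + 2 * V)))) (by positivity)
    (lt_of_le_of_lt (min_le_left _ _) (by norm_num))
  have h2 : min (1/2) (c / (2 * (Real.pi + 2 * V))) * (Real.pi + 2 * V) ≤ c / 2 := by
    calc _ ≤ (c / (2 * (Real.pi + 2 * V))) * (Real.pi + 2 * V) :=
          mul_le_mul_of_nonneg_right (min_le_right _ _) hD.le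
      _ = c / 2 := by field_simp
  simp only [c] at h h2 hc
  linarith

/-- change of variables -/
lemma cos_image : Real.cos '' Ioo 0 Real.pi = Ioo (-1) 1 := by
  ext t; constructor
  · rintro ⟨θ, hθ, rfl⟩
    have h1 := Real.cos_lt_cos_of_nonneg_of_le_pi le_rfl hθ.2.le hθ.1
    have h2 := Real.cos_lt_cos_of_nonneg_of_le_pi hθ.1.le le_rfl hθ.2
    simp at h1 h2; exact ⟨h2, h1⟩
  · intro h
    exact ⟨Real.arccos t, ⟨Real.arccos_pos.2 h.2, Real.arccos_lt_pi.2 h.1⟩, Real.cos_arccos h.1.le h.2.le⟩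

lemma cov (f : ℝ → ℝ) : ∫ t in Ioo (-1:ℝ) 1, f t = ∫ θ in Ioo 0 Real.pi, Real.sin θ * f (Real.cos θ) := by
  rw [← cos_image, integral_image_eq_integral_abs_deriv_smul measurableSet_Ioo
    (fun x _ => (Real.hasDerivAt_cos x).hasDerivWithinAt)
    (Real.injOn_cos.mono Ioo_subset_Icc_self)]
  refine setIntegral_congr_fun measurableSet_Ioo fun θ hθ => ?_
  simp [abs_of_pos (Real.sin_pos_of_pos_of_lt_pi hθ.1 hθ.2)]

lemma cov_int (f : ℝ → ℝ) : IntegrableOn f (Ioo (-1:ℝ) 1) ↔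
    IntegrableOn (fun θ => Real.sin θ * f (Real.cos θ)) (Ioo 0 Real.pi) := by
  rw [← cos_image, integrableOn_image_iff_integrableOn_abs_deriv_smul measurableSet_Ioo
    (fun x _ => (Real.hasDerivAt_cos x).hasDerivWithinAt)
    (Real.injOn_cos.mono Ioo_subset_Icc_self)]
  refine integrableOn_congr_fun (fun θ hθ => ?_) measurableSet_Ioo
  simp [abs_of_pos (Real.sin_pos_of_pos_of_lt_pi hθ.1 hθ.2)]

def hF (F : ℝ[X]) (t : ℝ) : ℝ := (ev F (Real.arccos t)).re / √(1 - t ^ 2)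

lemma hF_cos (F : ℝ[X]) {θ : ℝ} (hθ : θ ∈ Ioo 0 Real.pi) :
    Real.sin θ * hF F (Real.cos θ) = (ev F θ).re := by
  have := Real.sin_pos_of_pos_of_lt_pi hθ.1 hθ.2
  rw [hF, Real.arccos_cos hθ.1.le hθ.2.le, ← Real.sin_sq, Real.sqrt_sq this.le]
  field_simp

lemma hF_sub (F G : ℝ[X]) (t : ℝ) : hF (F - G) t = hF F t - hF G t := by
  simp [hF, ev_sub, sub_div]

lemma cont_intOn {f : ℝ → ℝ} (hf : Continuous f) (a b : ℝ) : IntegrableOn f (Ioo a b) :=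
  (hf.continuousOn.integrableOn_compact isCompact_Icc).mono_set Ioo_subset_Icc_self

lemma hF_int (F : ℝ[X]) : IntegrableOn (hF F) (Ioo (-1:ℝ) 1) := by
  rw [cov_int]
  refine IntegrableOn.congr_fun (f := fun θ => (ev F θ).re) ?_ (fun θ hθ => (hF_cos F hθ).symm) measurableSet_Ioo
  exact cont_intOn (Complex.continuous_re.comp (ev_cont F)) _ _

lemma Ioo_eq (f : ℝ → ℝ) : ∫ θ in Ioo 0 Real.pi, f θ = ∫ θ in (0:ℝ)..Real.pi, f θ := by
  rw [intervalIntegral.integral_of_le Real.pi_pos.le, integral_Ioc_eq_integral_Ioo]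

lemma hF_moment (F p : ℝ[X]) (h0 : F.coeff 0 = 0)
    (hp : ∀ θ : ℝ, (ev F θ).im = Real.sin θ * p.eval (Real.cos θ)) (n : ℕ) :
    ∫ t in Ioo (-1:ℝ) 1, hF F t * Real.cos (n * Real.arccos t) =
    ∫ t in Ioo (-1:ℝ) 1, p.eval t * Real.sin (n * Real.arccos t) := by
  rw [cov, cov]
  have e1 : ∫ θ in Ioo 0 Real.pi, Real.sin θ * (hF F (Real.cos θ) * Real.cos (n * Real.arccos (Real.cos θ)))
      = ∫ θ in Ioo 0 Real.pi, (ev F θ).re * (ev (X ^ n) θ).re := by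
    refine setIntegral_congr_fun measurableSet_Ioo fun θ hθ => ?_
    rw [← mul_assoc, hF_cos F hθ, Real.arccos_cos hθ.1.le hθ.2.le, ev_X_pow_re]
  have e2 : ∫ θ in Ioo 0 Real.pi, Real.sin θ * (p.eval (Real.cos θ) * Real.sin (n * Real.arccos (Real.cos θ)))
      = ∫ θ in Ioo 0 Real.pi, (ev F θ).im * (ev (X ^ n) θ).im := by
    refine setIntegral_congr_fun measurableSet_Ioo fun θ hθ => ?_
    rw [← mul_assoc, ← hp, Real.arccos_cos hθ.1.le hθ.2.le, ev_X_pow_im]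
  rw [e1, e2, Ioo_eq, Ioo_eq]
  have hP := pairing (F * X ^ n) (by simp [h0])
  simp only [ev_mul, Complex.mul_re] at hP
  have hcim : ∀ A : ℝ[X], Continuous fun θ => (ev A θ).im :=
    fun A => Complex.continuous_im.comp (ev_cont A)
  have hcre : ∀ A : ℝ[X], Continuous fun θ => (ev A θ).re :=
    fun A => Complex.continuous_re.comp (ev_cont A)
  have h1 := hcim F
  have h2 := hcre F
  have h3 := hcim (X ^ n)
  have h4 := hcre (X ^ n)
  rw [intervalIntegral.integral_sub (Continuous.intervalIntegrable (by fun_prop) _ _)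
      (Continuous.intervalIntegrable (by fun_prop) _ _)] at hP
  linarith

lemma hF_zyg (F p : ℝ[X]) (h0 : F.coeff 0 = 0)
    (hp : ∀ θ : ℝ, (ev F θ).im = Real.sin θ * p.eval (Real.cos θ)) {K : ℝ} (hK : 0 < K) :
    ∫ t in Ioo (-1:ℝ) 1, |hF F t| ≤ 4 * Real.pi / K +
      ∫ t in Ioo (-1:ℝ) 1, |p.eval t| * Real.posLog (K * |p.eval t|) := by
  rw [cov, cov]
  have e1 : ∫ θ in Ioo 0 Real.pi, Real.sin θ * |hF F (Real.cos θ)|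
      = ∫ θ in Ioo 0 Real.pi, |(ev F θ).re| := by
    refine setIntegral_congr_fun measurableSet_Ioo fun θ hθ => ?_
    rw [← hF_cos F hθ, abs_mul, abs_of_pos (Real.sin_pos_of_pos_of_lt_pi hθ.1 hθ.2)]
  rw [e1, Ioo_eq]
  refine (zyg F h0 hK).trans ?_
  rw [← Ioo_eq]
  refine add_le_add le_rfl ?_
  have hpc : Continuous fun θ => p.eval (Real.cos θ) := p.continuous.comp Real.continuous_cos
  have hF1 : Continuous fun θ => (ev F θ).im := Complex.continuous_im.comp (ev_cont F)
  refine setIntegral_mono_on (cont_intOn ?_ _ _) (cont_intOn ?_ _ _)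
    measurableSet_Ioo fun θ hθ => ?_
  · fun_prop
  · fun_prop
  have hs := Real.sin_pos_of_pos_of_lt_pi hθ.1 hθ.2
  rw [hp, abs_mul, abs_of_pos hs, mul_assoc]
  gcongr ?_ * (?_ * ?_)
  refine Real.monotoneOn_posLog (by simp; positivity) (by simp; positivity) ?_
  gcongr
  exact mul_le_of_le_one_left (abs_nonneg _) (Real.sin_le_one θ)

end HS

namespace HS
open Polynomial

lemma posLog_mono {a b : ℝ} (ha : 0 ≤ a) (h : a ≤ b) : Real.posLog a ≤ Real.posLog b :=
  Real.monotoneOn_posLog ha (le_trans ha h) h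

lemma posLog_le_self {a : ℝ} (ha : 0 ≤ a) : Real.posLog a ≤ a := by
  rw [Real.posLog_apply]
  exact max_le ha (Real.log_le_self ha)

lemma phi_sub {K : ℝ} (hK : 0 < K) (a b : ℝ) :
    |a + b| * Real.posLog (K * |a + b|) ≤
      2 * (|a| * Real.posLog (2 * K * |a|)) + 2 * (|b| * Real.posLog (2 * K * |b|)) := by
  have h1 := abs_add_le a b
  have n1 : 0 ≤ |a| * Real.posLog (2 * K * |a|) := mul_nonneg (abs_nonneg _) Real.posLog_nonneg
  have n2 : 0 ≤ |b| * Real.posLog (2 * K * |b|) := mul_nonneg (abs_nonneg _) Real.posLog_nonneg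
  have main : ∀ c : ℝ, |a + b| ≤ 2 * |c| →
      |a + b| * Real.posLog (K * |a + b|) ≤ 2 * (|c| * Real.posLog (2 * K * |c|)) := by
    intro c hc
    rw [← mul_assoc]
    refine mul_le_mul hc (posLog_mono (by positivity) ?_) Real.posLog_nonneg (by positivity)
    nlinarith
  rcases le_total |a| |b| with h | h
  · have := main b (by linarith); linarith
  · have := main a (by linarith); linarith

lemma abs_le_phi {K : ℝ} (hK : 0 < K) (a : ℝ) : |a| ≤ 3 / K + |a| * Real.posLog (K * |a|) := by
  have n1 : 0 ≤ |a| * Real.posLog (K * |a|) := mul_nonneg (abs_nonneg _) Real.posLog_nonneg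
  rcases le_total (K * |a|) 3 with h | h
  · have : |a| ≤ 3 / K := by rw [le_div_iff₀ hK]; linarith
    linarith
  · have h1 : 1 ≤ Real.posLog (K * |a|) := by
      rw [Real.posLog_apply]
      refine le_max_of_le_right ?_
      rw [Real.le_log_iff_exp_le (by linarith)]
      linarith [Real.exp_one_lt_d9]
    have : 0 < 3 / K := by positivity
    nlinarith [abs_nonneg a]

abbrev νI : Measure ℝ := volume.restrict (Ioo (-1 : ℝ) 1)

instance : IsFiniteMeasure νI := ⟨by simp [νI]⟩

variable {g : ℝ → ℝ}

lemma phi_meas (hg : AEStronglyMeasurable g νI) (K : ℝ) :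
    AEStronglyMeasurable (fun t => |g t| * Real.posLog (K * |g t|)) νI := by
  have : Continuous fun y : ℝ => |y| * Real.posLog (K * |y|) := by fun_prop
  exact this.comp_aestronglyMeasurable hg

lemma phi_int (hg : AEStronglyMeasurable g νI)
    (hg' : Integrable (fun t => |g t| * Real.posLog |g t|) νI) :
    Integrable g νI := by
  have h : Integrable (fun t => 3 / 1 + |g t| * Real.posLog |g t|) νI := (integrable_const _).add hg'
  refine h.mono' hg (Eventually.of_forall fun t => ?_)
  have := abs_le_phi one_pos (g t)
  simpa using this

lemma phi_intK (hg : AEStronglyMeasurable g νI)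
    (hg' : Integrable (fun t => |g t| * Real.posLog |g t|) νI) (K : ℝ) :
    Integrable (fun t => |g t| * Real.posLog (K * |g t|)) νI := by
  have h : Integrable (fun t => Real.posLog K * |g t| + |g t| * Real.posLog |g t|) νI :=
    ((phi_int hg hg').abs.const_mul _).add hg'
  refine h.mono' (phi_meas hg K) (Eventually.of_forall fun t => ?_)
  rw [Real.norm_of_nonneg (mul_nonneg (abs_nonneg _) Real.posLog_nonneg)]
  have := Real.posLog_mul (x := K) (y := |g t|)
  nlinarith [abs_nonneg (g t)]

lemma approx_poly (hg : AEStronglyMeasurable g νI)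
    (hg' : Integrable (fun t => |g t| * Real.posLog |g t|) νI) {K η : ℝ} (hK : 0 < K) (hη : 0 < η) :
    ∃ p : ℝ[X], Integrable (fun t => |g t - p.eval t| * Real.posLog (K * |g t - p.eval t|)) νI ∧
      ∫ t, |g t - p.eval t| * Real.posLog (K * |g t - p.eval t|) ∂νI ≤ η := by
  have hI := phi_intK hg hg' (2 * K)
  let φ : ℕ → ℝ → ℝ := fun M y => if |y| ≤ M then y else 0
  have hφ : ∀ M, Measurable (φ M) := fun M =>
    Measurable.ite (measurableSet_le measurable_norm measurable_const) measurable_id measurable_const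
  have hφle : ∀ M y, |y - φ M y| ≤ |y| := by
    intro M y; simp only [φ]; split_ifs <;> simp
  have hφM : ∀ M y, |φ M y| ≤ M := by
    intro M y; simp only [φ]; split_ifs with h <;> simp [h]
  have hφg : ∀ M, AEStronglyMeasurable (fun t => φ M (g t)) νI := fun M =>
    ((hφ M).comp_aemeasurable hg.aemeasurable).aestronglyMeasurable
  have hr : ∀ M, AEStronglyMeasurable (fun t => g t - φ M (g t)) νI := fun M => hg.sub (hφg M)
  have hmono : ∀ M y, |y - φ M y| * Real.posLog (2 * K * |y - φ M y|) ≤ |y| * Real.posLog (2 * K * |y|) := by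
    intro M y
    refine mul_le_mul (hφle M y) (posLog_mono (by positivity) ?_) Real.posLog_nonneg (abs_nonneg _)
    have := hφle M y
    gcongr
  have hlim : Tendsto (fun M => ∫ t, |g t - φ M (g t)| * Real.posLog (2 * K * |g t - φ M (g t)|) ∂νI)
      atTop (nhds (∫ t, (0:ℝ) ∂νI)) := by
    refine tendsto_integral_of_dominated_convergence _ (fun M => phi_meas (hr M) (2 * K)) hI
      (fun M => Eventually.of_forall fun t => ?_) (Eventually.of_forall fun t => ?_)
    · rw [Real.norm_of_nonneg (mul_nonneg (abs_nonneg _) Real.posLog_nonneg)]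
      exact hmono M (g t)
    · obtain ⟨N, hN⟩ := exists_nat_ge |g t|
      refine tendsto_const_nhds.congr' ?_
      filter_upwards [eventually_ge_atTop N] with M hM
      have : |g t| ≤ M := hN.trans (by exact_mod_cast hM)
      simp [φ, this]
  rw [integral_zero] at hlim
  obtain ⟨M, hM⟩ := (hlim.eventually (gt_mem_nhds (by positivity : (0:ℝ) < η / 4))).exists
  set f : ℝ → ℝ := fun t => φ M (g t)
  have hfb : MemLp f (ENNReal.ofReal 2) νI :=
    MemLp.of_bound (hφg M) M (Eventually.of_forall fun t => hφM M (g t))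
  -- choose c
  set e := η / (64 * K) with he
  have he0 : 0 < e := by positivity
  obtain ⟨c, hc, hcL⟩ := hfb.exists_boundedContinuous_integral_rpow_sub_le (by norm_num) he0
  set δ := min 1 (e / 2) with hδ
  have hδ0 : 0 < δ := by positivity
  have hδ2 : δ ^ 2 ≤ e / 2 := by
    have h1 : δ ≤ 1 := min_le_left _ _
    have h2 : δ ≤ e / 2 := min_le_right _ _
    nlinarith
  obtain ⟨p, hp⟩ := exists_polynomial_near_of_continuousOn (-1) 1 c c.continuous.continuousOn δ hδ0
  have hpm : AEStronglyMeasurable (fun t => p.eval t) νI := p.continuous.aestronglyMeasurable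
  have hcint : Integrable (fun t => (f t - c t) ^ 2) νI := by
    have hcL2 : MemLp (fun t => f t - c t) (ENNReal.ofReal 2) νI := hfb.sub hcL
    have := hcL2.integrable_norm_rpow (by simp) (by simp)
    refine this.congr (Eventually.of_forall fun t => ?_)
    simp
  have hc' : ∫ t, (f t - c t) ^ 2 ∂νI ≤ e := by
    refine le_trans (le_of_eq ?_) hc
    refine integral_congr_ae (Eventually.of_forall fun t => ?_)
    simp
  have hbound : ∀ᵐ t ∂νI, |g t - p.eval t| * Real.posLog (K * |g t - p.eval t|) ≤
      2 * (|g t - f t| * Real.posLog (2 * K * |g t - f t|)) +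
        (8 * K * (f t - c t) ^ 2 + 8 * K * δ ^ 2) := by
    filter_upwards [ae_restrict_mem measurableSet_Ioo] with t ht
    have h1 := phi_sub hK (g t - f t) (f t - p.eval t)
    rw [sub_add_sub_cancel] at h1
    refine h1.trans (add_le_add le_rfl ?_)
    have h2 : Real.posLog (2 * K * |f t - p.eval t|) ≤ 2 * K * |f t - p.eval t| :=
      posLog_le_self (by positivity)
    have h3 := hp t ⟨ht.1.le, ht.2.le⟩
    have h4 : 2 * (|f t - p.eval t| * Real.posLog (2 * K * |f t - p.eval t|)) ≤
        4 * K * (f t - p.eval t) ^ 2 := by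
      rw [← sq_abs]; nlinarith [abs_nonneg (f t - p.eval t)]
    have h5 : (p.eval t - c t) ^ 2 ≤ δ ^ 2 := by
      rw [← sq_abs]; exact pow_le_pow_left₀ (abs_nonneg _) h3.le 2
    have h6 : (f t - p.eval t) ^ 2 ≤ 2 * (f t - c t) ^ 2 + 2 * δ ^ 2 := by
      nlinarith [sq_nonneg ((f t - c t) + (p.eval t - c t))]
    nlinarith
  have hfi : Integrable (fun t => |g t - f t| * Real.posLog (2 * K * |g t - f t|)) νI := by
    refine hI.mono' (phi_meas (hr M) _) (Eventually.of_forall fun t => ?_)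
    rw [Real.norm_of_nonneg (mul_nonneg (abs_nonneg _) Real.posLog_nonneg)]
    exact hmono M (g t)
  have hRi : Integrable (fun t => 2 * (|g t - f t| * Real.posLog (2 * K * |g t - f t|)) +
        (8 * K * (f t - c t) ^ 2 + 8 * K * δ ^ 2)) νI :=
    (hfi.const_mul _).add ((hcint.const_mul _).add (integrable_const _))
  have hLi : Integrable (fun t => |g t - p.eval t| * Real.posLog (K * |g t - p.eval t|)) νI := by
    refine hRi.mono' (phi_meas (hg.sub hpm) K) ?_
    filter_upwards [hbound] with t ht
    rw [Real.norm_of_nonneg (mul_nonneg (abs_nonneg _) Real.posLog_nonneg)]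
    exact ht
  refine ⟨p, hLi, ?_⟩
  refine (integral_mono_ae hLi hRi hbound).trans ?_
  have hspl : ∫ t, (2 * (|g t - f t| * Real.posLog (2 * K * |g t - f t|)) +
        (8 * K * (f t - c t) ^ 2 + 8 * K * δ ^ 2)) ∂νI =
      2 * ∫ t, (|g t - f t| * Real.posLog (2 * K * |g t - f t|)) ∂νI +
        (8 * K * ∫ t, (f t - c t) ^ 2 ∂νI + νI.real univ * (8 * K * δ ^ 2)) := by
    have i1 : Integrable (fun t => 8 * K * (f t - c t) ^ 2 + 8 * K * δ ^ 2) νI :=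
      (hcint.const_mul _).add (integrable_const _)
    rw [integral_add (hfi.const_mul _) i1,
      integral_add (hcint.const_mul _) (integrable_const _), integral_const_mul, integral_const_mul,
      integral_const, smul_eq_mul]
  rw [hspl]
  have hm : νI.real univ = 2 := by
    simp [νI, Measure.real]; norm_num
  rw [hm]
  have h7 : 8 * K * ∫ t, (f t - c t) ^ 2 ∂νI ≤ 8 * K * e := by gcongr
  have h8 : 2 * (8 * K * δ ^ 2) ≤ 2 * (8 * K * (e / 2)) := by gcongr
  have h9 : K * e = η / 64 := by rw [he]; field_simp
  nlinarith

lemma tendsto_mul_L1 {f : ℕ → ℝ → ℝ} {F c : ℝ → ℝ} (hf : ∀ n, Integrable (f n) νI)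
    (hF : Integrable F νI) (hc : AEStronglyMeasurable c νI) (hc1 : ∀ t, |c t| ≤ 1)
    (h : Tendsto (fun n => ∫ t, |f n t - F t| ∂νI) atTop (nhds 0)) :
    Tendsto (fun n => ∫ t, f n t * c t ∂νI) atTop (nhds (∫ t, F t * c t ∂νI)) := by
  have hb : ∀ G : ℝ → ℝ, Integrable G νI → Integrable (fun t => G t * c t) νI := fun G hG =>
    hG.mul_bdd (c := 1) hc (Eventually.of_forall hc1)
  rw [tendsto_iff_norm_sub_tendsto_zero]
  refine squeeze_zero (fun n => norm_nonneg _) (fun n => ?_) h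
  rw [← integral_sub (hb _ (hf n)) (hb _ hF)]
  refine (norm_integral_le_integral_norm _).trans ?_
  refine integral_mono ((hb _ (hf n)).sub (hb _ hF)).norm ((hf n).sub hF).abs fun t => ?_
  simp only [← sub_mul, norm_mul, Real.norm_eq_abs]
  exact mul_le_of_le_one_right (abs_nonneg _) (hc1 t)

lemma exists_h (hg : AEStronglyMeasurable g νI)
    (hg' : Integrable (fun t => |g t| * Real.posLog |g t|) νI) :
    ∃ h : ℝ → ℝ, Integrable h νI ∧ ∀ n : ℕ,
      ∫ t, h t * Real.cos (n * Real.arccos t) ∂νI = ∫ t, g t * Real.sin (n * Real.arccos t) ∂νI := by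
  have hgi := phi_int hg hg'
  choose p hp1 hp2 using fun n : ℕ => approx_poly hg hg' (K := 2 * ((n:ℝ) + 1)) (η := 1 / ((n:ℝ) + 1))
    (by positivity) (by positivity)
  choose F hF0 hFp using fun n => sinrep (p n)
  have hint : ∀ n, Integrable (hF (F n)) νI := fun n => hF_int (F n)
  have hpi : ∀ n, Integrable (fun t => (p n).eval t) νI := fun n =>
    cont_intOn (p n).continuous _ _
  have hpc : ∀ n, AEStronglyMeasurable (fun t => g t - (p n).eval t) νI := fun n =>
    hg.sub (hpi n).1
  have hmono : ∀ N n : ℕ, N ≤ n →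
      Integrable (fun t => |g t - (p n).eval t| * Real.posLog (2 * ((N:ℝ)+1) * |g t - (p n).eval t|)) νI ∧
      ∫ t, |g t - (p n).eval t| * Real.posLog (2 * ((N:ℝ)+1) * |g t - (p n).eval t|) ∂νI ≤ 1 / ((N:ℝ)+1) := by
    intro N n hNn
    have hc : (N:ℝ) ≤ n := by exact_mod_cast hNn
    have hle : ∀ t, |g t - (p n).eval t| * Real.posLog (2 * ((N:ℝ)+1) * |g t - (p n).eval t|) ≤
        |g t - (p n).eval t| * Real.posLog (2 * ((n:ℝ)+1) * |g t - (p n).eval t|) := by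
      intro t
      gcongr ?_ * ?_
      exact posLog_mono (by positivity) (by gcongr)
    have h1 : Integrable (fun t => |g t - (p n).eval t| * Real.posLog (2 * ((N:ℝ)+1) * |g t - (p n).eval t|)) νI := by
      refine (hp1 n).mono' (phi_meas (hpc n) _) (Eventually.of_forall fun t => ?_)
      rw [Real.norm_of_nonneg (mul_nonneg (abs_nonneg _) Real.posLog_nonneg)]
      exact hle t
    refine ⟨h1, (integral_mono h1 (hp1 n) hle).trans ((hp2 n).trans ?_)⟩
    gcongr
  have hC : ∀ N n m : ℕ, N ≤ n → N ≤ m →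
      ∫ t, |hF (F n) t - hF (F m) t| ∂νI ≤ (4 * Real.pi + 4) / ((N:ℝ)+1) := by
    intro N n m hn hm
    have h1 := hF_zyg (F n - F m) (p n - p m) (by simp [hF0]) (fun θ => by
      simp [ev_sub, hFp]; ring) (K := (N:ℝ)+1) (by positivity)
    simp only [hF_sub, eval_sub] at h1
    obtain ⟨i1, b1⟩ := hmono N n hn
    obtain ⟨i2, b2⟩ := hmono N m hm
    have hle : ∀ t, |(p n).eval t - (p m).eval t| * Real.posLog (((N:ℝ)+1) * |(p n).eval t - (p m).eval t|)
        ≤ 2 * (|g t - (p n).eval t| * Real.posLog (2 * ((N:ℝ)+1) * |g t - (p n).eval t|)) +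
          2 * (|g t - (p m).eval t| * Real.posLog (2 * ((N:ℝ)+1) * |g t - (p m).eval t|)) := by
      intro t
      have := phi_sub (K := (N:ℝ)+1) (by positivity) ((p n).eval t - g t) (g t - (p m).eval t)
      rw [sub_add_sub_cancel, abs_sub_comm _ (g t)] at this
      exact this
    have h2 : ∫ t, |(p n).eval t - (p m).eval t| * Real.posLog (((N:ℝ)+1) * |(p n).eval t - (p m).eval t|) ∂νI
        ≤ 4 / ((N:ℝ)+1) := by
      have c1 := (p n).continuous
      have c2 := (p m).continuous
      refine (integral_mono (cont_intOn (f := fun t => |(p n).eval t - (p m).eval t| * Real.posLog (((N:ℝ)+1) * |(p n).eval t - (p m).eval t|)) (by fun_prop) _ _)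
        ((i1.const_mul 2).add (i2.const_mul 2)) hle).trans ?_
      simp only [Pi.add_apply]
      rw [integral_add (i1.const_mul 2) (i2.const_mul 2), integral_const_mul, integral_const_mul]
      have : 4 / ((N:ℝ)+1) = 2 * (1 / ((N:ℝ)+1)) + 2 * (1 / ((N:ℝ)+1)) := by ring
      linarith
    rw [add_div]
    linarith
  let u : ℕ → (ℝ →₁[νI] ℝ) := fun n => (hint n).toL1 _
  have hdist : ∀ n m, dist (u n) (u m) = ∫ t, |hF (F n) t - hF (F m) t| ∂νI := by
    intro n m
    rw [dist_eq_norm]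
    simp only [u]
    rw [← Integrable.toL1_sub, L1.norm_of_fun_eq_integral_norm]
    rfl
  have hcau : CauchySeq u := by
    refine cauchySeq_of_le_tendsto_0 (fun N : ℕ => (4 * Real.pi + 4) / ((N:ℝ)+1))
      (fun n m N hn hm => by rw [hdist]; exact hC N n m hn hm) ?_
    have := tendsto_one_div_add_atTop_nhds_zero_nat (𝕜 := ℝ)
    have := this.const_mul (4 * Real.pi + 4)
    simpa [mul_one_div, div_eq_mul_inv] using this
  obtain ⟨U, hU⟩ := cauchySeq_tendsto_of_complete hcau
  have hUi : Integrable U νI := L1.integrable_coeFn U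
  refine ⟨U, hUi, fun n => ?_⟩
  have hlim : Tendsto (fun k => ∫ t, |hF (F k) t - U t| ∂νI) atTop (nhds 0) := by
    rw [tendsto_iff_norm_sub_tendsto_zero] at hU
    refine hU.congr fun k => ?_
    rw [L1.norm_eq_integral_norm]
    refine integral_congr_ae ?_
    filter_upwards [Lp.coeFn_sub (u k) U, (hint k).coeFn_toL1] with t h1 h2
    rw [h1]
    simp only [Pi.sub_apply, u]
    rw [h2, Real.norm_eq_abs]
  have hac := Real.continuous_arccos
  have hl1 := tendsto_mul_L1 hint hUi (c := fun t => Real.cos (n * Real.arccos t))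
    (Continuous.aestronglyMeasurable (by fun_prop)) (fun t => Real.abs_cos_le_one _) hlim
  have hlim2 : Tendsto (fun k => ∫ t, |(p k).eval t - g t| ∂νI) atTop (nhds 0) := by
    have hb : ∀ k : ℕ, ∫ t, |(p k).eval t - g t| ∂νI ≤ 4 * (1 / ((k:ℝ) + 1)) := by
      intro k
      have := integral_mono (μ := νI) ((hpi k).sub hgi).abs
        ((integrable_const (3 / (2 * ((k:ℝ)+1)))).add (hp1 k)) (fun t => by
          have := abs_le_phi (K := 2 * ((k:ℝ)+1)) (by positivity) (g t - (p k).eval t)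
          simp only [Pi.sub_apply, Pi.add_apply]
          rw [abs_sub_comm]
          exact this)
      refine this.trans ?_
      simp only [Pi.add_apply]
      rw [integral_add (integrable_const _) (hp1 k), integral_const]
      have hm : νI.real univ = 2 := by
        simp [νI, Measure.real]; norm_num
      rw [hm, smul_eq_mul]
      have e : 2 * (3 / (2 * ((k:ℝ)+1))) = 3 * (1 / ((k:ℝ)+1)) := by field_simp
      linarith [hp2 k]
    refine squeeze_zero (fun k => integral_nonneg fun t => abs_nonneg _) hb ?_
    simpa using (tendsto_one_div_add_atTop_nhds_zero_nat (𝕜 := ℝ)).const_mul 4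
  have hl2 := tendsto_mul_L1 hpi hgi (c := fun t => Real.sin (n * Real.arccos t))
    (Continuous.aestronglyMeasurable (by fun_prop)) (fun t => Real.abs_sin_le_one _) hlim2
  refine tendsto_nhds_unique hl1 (hl2.congr fun k => ?_)
  exact (hF_moment (F k) (p k) (hF0 k) (hFp k) n).symm

end HS

namespace HS

lemma E_ne {z : ℂ} (hz : ‖z‖ < 1) {e e' : ℂ} (he : ‖e‖ = 1) (he' : ‖e'‖ = 1) :
    (1 - z * e) ≠ 0 ∧ (1 - z * e') ≠ 0 := by
  constructor
  · intro h
    have : z * e = 1 := (sub_eq_zero.1 h).symm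
    have := congrArg norm this
    rw [norm_mul, he] at this; simp at this; linarith
  · intro h
    have : z * e' = 1 := (sub_eq_zero.1 h).symm
    have := congrArg norm this
    rw [norm_mul, he'] at this; simp at this; linarith

lemma geom_pts {z : ℂ} (hz : ‖z‖ < 1) {t : ℝ} (ht : t ∈ Ioo (-1:ℝ) 1) :
    HasSum (fun n : ℕ => 2 * z ^ n * (Real.cos (n * Real.arccos t) : ℂ))
      (1 + (1 - z ^ 2) / (1 - 2 * z * t + z ^ 2)) ∧
    HasSum (fun n : ℕ => 2 * z ^ n * (Real.sin (n * Real.arccos t) : ℂ))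
      (2 * z * (√(1 - t ^ 2) : ℝ) / (1 - 2 * z * t + z ^ 2)) := by
  set θ := Real.arccos t with hθ
  have hc : t = Real.cos θ := (Real.cos_arccos ht.1.le ht.2.le).symm
  have hs : √(1 - t ^ 2) = Real.sin θ := (Real.sin_arccos t).symm
  set e := Complex.exp (θ * Complex.I) with he
  set e' := Complex.exp (-(θ * Complex.I)) with he'
  have hn : ‖e‖ = 1 := Complex.norm_exp_ofReal_mul_I θ
  have hn' : ‖e'‖ = 1 := by
    have := Complex.norm_exp_ofReal_mul_I (-θ)
    rw [he']; convert this using 3; push_cast; ring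
  have hee : e * e' = 1 := by rw [he, he', ← Complex.exp_add]; simp
  have hsum : e + e' = 2 * t := by
    rw [hc, Complex.ofReal_cos, Complex.cos, he, he']; ring_nf
  have hdiff : e - e' = 2 * Complex.I * Real.sin θ := by
    rw [Complex.ofReal_sin, Complex.sin, he, he']
    ring_nf; rw [Complex.I_sq]; ring
  have hcn : ∀ n : ℕ, (Real.cos (n * θ) : ℂ) = (e ^ n + e' ^ n) / 2 := by
    intro n
    rw [Complex.ofReal_cos, Complex.cos, he, he', ← Complex.exp_nat_mul, ← Complex.exp_nat_mul]
    congr 2 <;> push_cast <;> ring_nf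
  have hsn : ∀ n : ℕ, (Real.sin (n * θ) : ℂ) = -Complex.I * (e ^ n - e' ^ n) / 2 := by
    intro n
    rw [Complex.ofReal_sin, Complex.sin, he, he', ← Complex.exp_nat_mul, ← Complex.exp_nat_mul]
    push_cast; ring_nf
  have g1 := hasSum_geometric_of_norm_lt_one (ξ := z * e) (by rwa [norm_mul, hn, mul_one])
  have g2 := hasSum_geometric_of_norm_lt_one (ξ := z * e') (by rwa [norm_mul, hn', mul_one])
  obtain ⟨n1, n2⟩ := E_ne hz hn hn'
  have hE : 1 - 2 * z * t + z ^ 2 = (1 - z * e) * (1 - z * e') := by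
    linear_combination (-z) * hsum * (-1) * (-1) * (-1) - z ^ 2 * hee
  constructor
  · have e1 : (fun n : ℕ => 2 * z ^ n * (Real.cos (n * θ) : ℂ)) =
        fun n => (z * e) ^ n + (z * e') ^ n := by
      ext n; rw [hcn]; rw [mul_pow, mul_pow]; ring
    have e2 : 1 + (1 - z ^ 2) / (1 - 2 * z * t + z ^ 2) = (1 - z * e)⁻¹ + (1 - z * e')⁻¹ := by
      rw [hE]; field_simp; linear_combination (z^2) * hee
    rw [e1, e2]; exact g1.add g2
  · have e1 : (fun n : ℕ => 2 * z ^ n * (Real.sin (n * θ) : ℂ)) =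
        fun n => -Complex.I * ((z * e) ^ n - (z * e') ^ n) := by
      ext n; rw [hsn]; rw [mul_pow, mul_pow]; ring
    have e2 : 2 * z * (√(1 - t ^ 2) : ℝ) / (1 - 2 * z * t + z ^ 2) =
        -Complex.I * ((1 - z * e)⁻¹ - (1 - z * e')⁻¹) := by
      rw [hE, hs]; field_simp
      linear_combination (z * Complex.I ) * hdiff + 2 * z * (Real.sin θ) * Complex.I_sq
    rw [e1, e2]; exact (g1.sub g2).mul_left (-Complex.I)

lemma series_int {f : ℝ → ℝ} {a : ℕ → ℝ → ℝ} {z : ℂ} (hz : ‖z‖ < 1) {S : ℝ → ℂ}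
    (hf : Integrable f νI) (ha : ∀ n, Continuous (a n)) (ha1 : ∀ n t, |a n t| ≤ 1)
    (hS : ∀ t ∈ Ioo (-1:ℝ) 1, HasSum (fun n : ℕ => 2 * z ^ n * (a n t : ℂ)) (S t)) :
    HasSum (fun n : ℕ => 2 * z ^ n * ((∫ t, f t * a n t ∂νI : ℝ) : ℂ)) (∫ t, (f t : ℂ) * S t ∂νI) := by
  have hi : ∀ n, Integrable (fun t => (f t : ℂ) * (2 * z ^ n * (a n t : ℂ))) νI := by
    intro n
    refine hf.ofReal.mul_bdd (c := 2 * ‖z‖ ^ n)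
      (Continuous.aestronglyMeasurable (by have := ha n; fun_prop)) (Eventually.of_forall fun t => ?_)
    have := ha1 n t
    simp only [norm_mul, norm_pow, Complex.norm_real, Real.norm_eq_abs]
    norm_num
    exact mul_le_of_le_one_right (by positivity) this
  have h := hasSum_integral_of_summable_integral_norm (μ := νI) hi ?_
  · have e1 : (fun n : ℕ => 2 * z ^ n * ((∫ t, f t * a n t ∂νI : ℝ) : ℂ)) =
        fun n => ∫ t, (f t : ℂ) * (2 * z ^ n * (a n t : ℂ)) ∂νI := by
      ext n
      rw [← integral_complex_ofReal, ← integral_const_mul]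
      refine integral_congr_ae (Eventually.of_forall fun t => ?_)
      simp; ring
    have e2 : ∫ t, (f t : ℂ) * S t ∂νI = ∫ t, ∑' n : ℕ, (f t : ℂ) * (2 * z ^ n * (a n t : ℂ)) ∂νI := by
      refine integral_congr_ae ?_
      filter_upwards [ae_restrict_mem measurableSet_Ioo] with t ht
      exact (((hS t ht).mul_left _).tsum_eq).symm
    rw [e1, e2]; exact h
  · have hs : Summable fun n : ℕ => (2 * ∫ t, |f t| ∂νI) * ‖z‖ ^ n :=
      (summable_geometric_of_lt_one (norm_nonneg _) hz).mul_left _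
    refine Summable.of_nonneg_of_le (fun n => integral_nonneg fun t => norm_nonneg _) (fun n => ?_) hs
    rw [mul_right_comm, ← integral_const_mul]
    refine integral_mono (hi n).norm (hf.abs.const_mul _) fun t => ?_
    have := ha1 n t
    simp only [norm_mul, norm_pow, Complex.norm_real, Real.norm_eq_abs]
    norm_num
    have h1 : 0 ≤ |f t| := abs_nonneg _
    have h2 : 0 ≤ ‖z‖ ^ n := by positivity
    calc |f t| * (2 * ‖z‖ ^ n * |a n t|) = (2 * ‖z‖ ^ n * |f t|) * |a n t| := by ring
      _ ≤ _ := mul_le_of_le_one_right (by positivity) this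

lemma E_den {z : ℂ} (hz : ‖z‖ < 1) {t : ℝ} (ht : t ∈ Icc (-1:ℝ) 1) : 1 - 2 * z * t + z ^ 2 ≠ 0 := by
  set θ := Real.arccos t with hθ
  have hc : t = Real.cos θ := (Real.cos_arccos ht.1 ht.2).symm
  set e := Complex.exp (θ * Complex.I) with he
  set e' := Complex.exp (-(θ * Complex.I)) with he'
  have hn : ‖e‖ = 1 := Complex.norm_exp_ofReal_mul_I θ
  have hn' : ‖e'‖ = 1 := by
    have := Complex.norm_exp_ofReal_mul_I (-θ)
    rw [he']; convert this using 3; push_cast; ring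
  have hee : e * e' = 1 := by rw [he, he', ← Complex.exp_add]; simp
  have hsum : e + e' = 2 * t := by
    rw [hc, Complex.ofReal_cos, Complex.cos, he, he']; ring_nf
  obtain ⟨n1, n2⟩ := E_ne hz hn hn'
  have hE : 1 - 2 * z * t + z ^ 2 = (1 - z * e) * (1 - z * e') := by
    linear_combination (-z) * hsum * (-1) * (-1) * (-1) - z ^ 2 * hee
  rw [hE]; exact mul_ne_zero n1 n2

lemma integrable_ker {f : ℝ → ℝ} (hf : Integrable f νI) {S : ℝ → ℂ} (hS : ContinuousOn S (Icc (-1) 1)) :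
    Integrable (fun t => (f t : ℂ) * S t) νI := by
  obtain ⟨C, hC⟩ := isCompact_Icc.exists_bound_of_continuousOn hS
  refine hf.ofReal.mul_bdd (c := C)
    ((hS.mono Ioo_subset_Icc_self).aestronglyMeasurable measurableSet_Ioo) ?_
  filter_upwards [ae_restrict_mem measurableSet_Ioo] with t ht
  exact hC t (Ioo_subset_Icc_self ht)

lemma cosker_cont {z : ℂ} (hz : ‖z‖ < 1) :
    ContinuousOn (fun t : ℝ => (1 - z ^ 2) / (1 - 2 * z * t + z ^ 2)) (Icc (-1) 1) := by
  refine ContinuousOn.div (by fun_prop) (by fun_prop) fun t ht => E_den hz ht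

lemma sinker_cont {z : ℂ} (hz : ‖z‖ < 1) :
    ContinuousOn (fun t : ℝ => 2 * z * (√(1 - t ^ 2) : ℝ) / (1 - 2 * z * t + z ^ 2)) (Icc (-1) 1) := by
  refine ContinuousOn.div (by fun_prop) (by fun_prop) fun t ht => E_den hz ht

lemma cos_series {f : ℝ → ℝ} {z : ℂ} (hz : ‖z‖ < 1) (hf : Integrable f νI) :
    HasSum (fun n : ℕ => 2 * z ^ n * ((∫ t, f t * Real.cos (n * Real.arccos t) ∂νI : ℝ) : ℂ))
      ((∫ t, f t ∂νI : ℝ) + ∫ t, (f t : ℂ) * ((1 - z ^ 2) / (1 - 2 * z * t + z ^ 2)) ∂νI) := by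
  have hac := Real.continuous_arccos
  have h := series_int (a := fun n t => Real.cos (n * Real.arccos t)) hz hf
    (fun n => by fun_prop) (fun n t => Real.abs_cos_le_one _) (fun t ht => (geom_pts hz ht).1)
  convert h using 1
  have hfo : Integrable (fun t => (f t : ℂ)) νI := hf.ofReal
  rw [← integral_complex_ofReal, ← integral_add hfo (integrable_ker hf (cosker_cont hz))]
  refine integral_congr_ae (Eventually.of_forall fun t => ?_)
  simp only [mul_add, mul_one]

lemma sin_series {f : ℝ → ℝ} {z : ℂ} (hz : ‖z‖ < 1) (hf : Integrable f νI) :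
    HasSum (fun n : ℕ => 2 * z ^ n * ((∫ t, f t * Real.sin (n * Real.arccos t) ∂νI : ℝ) : ℂ))
      (∫ t, (f t : ℂ) * (2 * z * (√(1 - t ^ 2) : ℝ) / (1 - 2 * z * t + z ^ 2)) ∂νI) := by
  have hac := Real.continuous_arccos
  exact series_int (a := fun n t => Real.sin (n * Real.arccos t)) hz hf
    (fun n => by fun_prop) (fun n t => Real.abs_sin_le_one _) (fun t ht => (geom_pts hz ht).2)

lemma star {g h : ℝ → ℝ} (hg : Integrable g νI) (hh : Integrable h νI)
    (hm : ∀ n : ℕ, ∫ t, h t * Real.cos (n * Real.arccos t) ∂νI =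
      ∫ t, g t * Real.sin (n * Real.arccos t) ∂νI) :
    (∫ t, h t ∂νI = 0) ∧ ∀ z : ℂ, ‖z‖ < 1 →
      ∫ t, (h t : ℂ) * ((1 - z ^ 2) / (1 - 2 * z * t + z ^ 2)) ∂νI =
      ∫ t, (g t : ℂ) * (2 * z * (√(1 - t ^ 2) : ℝ) / (1 - 2 * z * t + z ^ 2)) ∂νI := by
  have h0 : ∫ t, h t ∂νI = 0 := by simpa using hm 0
  refine ⟨h0, fun z hz => ?_⟩
  have h1 := cos_series hz hh
  have h2 := sin_series hz hg
  simp_rw [hm] at h1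
  have := h1.unique h2
  rw [h0] at this; simpa using this

lemma int_cos (n : ℕ) (hn : n ≠ 0) : ∫ θ in (0:ℝ)..Real.pi, Real.cos (n * θ) = 0 := by
  have := pairing (Polynomial.X ^ n) (by simp [Polynomial.coeff_X_pow, hn.symm])
  simpa only [ev_X_pow_re] using this

lemma winv_int : Integrable (fun t : ℝ => 1 / √(1 - t ^ 2)) νI := by
  have := hF_int (1 : Polynomial ℝ)
  refine Integrable.congr this (Eventually.of_forall fun t => ?_)
  simp [hF, ev]

lemma cal1 {z : ℂ} (hz : ‖z‖ < 1) :
    ∫ t, ((1 / √(1 - t ^ 2) : ℝ) : ℂ) * ((1 - z ^ 2) / (1 - 2 * z * t + z ^ 2)) ∂νI = (Real.pi : ℂ) := by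
  have h1 := cos_series hz winv_int
  have hm : ∀ n : ℕ, ∫ t, (1 / √(1 - t ^ 2)) * Real.cos (n * Real.arccos t) ∂νI =
      if n = 0 then Real.pi else 0 := by
    intro n
    rw [show νI = volume.restrict (Ioo (-1:ℝ) 1) from rfl, cov]
    have : ∫ θ in Ioo 0 Real.pi, Real.sin θ * ((1 / √(1 - Real.cos θ ^ 2)) * Real.cos (n * Real.arccos (Real.cos θ)))
      = ∫ θ in Ioo 0 Real.pi, Real.cos (n * θ) := by
      refine setIntegral_congr_fun measurableSet_Ioo fun θ hθ => ?_
      have hs := Real.sin_pos_of_pos_of_lt_pi hθ.1 hθ.2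
      rw [Real.arccos_cos hθ.1.le hθ.2.le, ← Real.sin_sq, Real.sqrt_sq hs.le]
      field_simp
    rw [this, Ioo_eq]
    split_ifs with h
    · simp [h]
    · exact int_cos n h
  have h0 := hm 0
  simp only [CharP.cast_eq_zero, zero_mul, Real.cos_zero, mul_one, if_true] at h0
  simp_rw [hm] at h1
  have h2 := hasSum_single (f := fun n : ℕ => 2 * z ^ n * (((if n = 0 then Real.pi else 0 : ℝ)) : ℂ)) 0
    (fun n hn => by simp [hn])
  have := h1.unique h2
  rw [h0] at this
  simp only [pow_zero, if_true] at this
  linear_combination this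

lemma cal2 {z : ℂ} (hz : ‖z‖ < 1) :
    ∫ t : ℝ, (2 * z * (√(1 - t ^ 2) : ℝ) / (1 - 2 * z * t + z ^ 2)) ∂νI = (Real.pi : ℂ) * z := by
  have h1 := sin_series (f := fun _ => 1) hz (integrable_const _)
  have hm : ∀ n : ℕ, ∫ t, 1 * Real.sin (n * Real.arccos t) ∂νI =
      if n = 1 then Real.pi / 2 else 0 := by
    intro n
    rw [show νI = volume.restrict (Ioo (-1:ℝ) 1) from rfl, cov]
    rcases n with _ | n
    · simp
    have : ∫ θ in Ioo 0 Real.pi, Real.sin θ * (1 * Real.sin ((n+1:ℕ) * Real.arccos (Real.cos θ)))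
      = ∫ θ in Ioo 0 Real.pi, (1/2) * (Real.cos (n * θ) - Real.cos ((n+2 : ℕ) * θ)) := by
      refine setIntegral_congr_fun measurableSet_Ioo fun θ hθ => ?_
      rw [Real.arccos_cos hθ.1.le hθ.2.le]
      have e1 : (n:ℝ) * θ = (n + 1 : ℕ) * θ - θ := by push_cast; ring
      have e2 : ((n + 2 : ℕ):ℝ) * θ = (n + 1 : ℕ) * θ + θ := by push_cast; ring
      rw [e1, e2, Real.cos_sub, Real.cos_add]; ring
    rw [this, Ioo_eq, intervalIntegral.integral_const_mul, intervalIntegral.integral_sub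
      (Continuous.intervalIntegrable (by fun_prop) _ _) (Continuous.intervalIntegrable (by fun_prop) _ _),
      int_cos (n+2) (by omega)]
    rcases n with _ | n
    · simp; ring
    · rw [int_cos (n+1) (by omega)]; simp
  simp_rw [hm] at h1
  have h2 := hasSum_single (f := fun n : ℕ => 2 * z ^ n * (((if n = 1 then Real.pi / 2 else 0 : ℝ)) : ℂ)) 1
    (fun n hn => by simp [hn])
  have := h1.unique h2
  simp only [pow_one, if_true, Complex.ofReal_one, one_mul] at this
  rw [this]; push_cast; ring

end HS

namespace HS

def LP0 (f : ℝ → ℝ) (x : ℝ) : Prop :=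
  Tendsto (fun ρ : ℝ => ρ⁻¹ * ∫ t in Metric.closedBall x ρ, |f t| ∂νI) (nhdsWithin 0 (Ioi 0)) (nhds 0)

lemma LP0_of_le {u v f : ℝ → ℝ} {x C : ℝ} (hu : LP0 u x) (hv : LP0 v x)
    (iu : Integrable u νI) (iv : Integrable v νI)
    (h : ∀ t, |f t| ≤ |u t| + C * |v t|) : LP0 f x := by
  have h2 : Tendsto (fun ρ : ℝ => ρ⁻¹ * (∫ t in Metric.closedBall x ρ, |u t| ∂νI) +
      C * (ρ⁻¹ * ∫ t in Metric.closedBall x ρ, |v t| ∂νI)) (nhdsWithin 0 (Ioi 0)) (nhds 0) := by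
    simpa using Tendsto.add hu (Tendsto.const_mul C hv)
  refine squeeze_zero' ?_ ?_ h2
  · filter_upwards [self_mem_nhdsWithin] with ρ hρ
    have : 0 < ρ := hρ
    exact mul_nonneg (by positivity) (integral_nonneg fun t => abs_nonneg _)
  · filter_upwards [self_mem_nhdsWithin] with ρ hρ
    have : 0 < ρ := hρ
    calc ρ⁻¹ * ∫ t in Metric.closedBall x ρ, |f t| ∂νI
        ≤ ρ⁻¹ * ∫ t in Metric.closedBall x ρ, (|u t| + C * |v t|) ∂νI := by
          refine mul_le_mul_of_nonneg_left ?_ (by positivity)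
          refine integral_mono_of_nonneg (Eventually.of_forall fun t => abs_nonneg _) ?_
            (Eventually.of_forall h)
          exact (iu.abs.add (iv.abs.const_mul C)).restrict
      _ = _ := by
          rw [integral_add iu.abs.restrict (iv.abs.const_mul C).restrict, integral_const_mul]; ring

lemma LP0_cont {φ : ℝ → ℝ} {x : ℝ} (hc : ContinuousAt φ x) : LP0 (fun t => φ t - φ x) x := by
  unfold LP0
  rw [Metric.tendsto_nhdsWithin_nhds]
  intro η hη
  obtain ⟨δ, hδ, h⟩ := Metric.continuousAt_iff.1 hc (η / 4) (by positivity)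
  refine ⟨δ, hδ, fun {ρ} hρ hd => ?_⟩
  have hρ : 0 < ρ := hρ
  rw [Real.dist_eq, sub_zero] at hd ⊢
  rw [abs_of_pos hρ] at hd
  have h1 : ‖∫ t in Metric.closedBall x ρ, |φ t - φ x| ∂νI‖ ≤ (η / 4) * (νI.real (Metric.closedBall x ρ)) := by
    refine norm_setIntegral_le_of_norm_le_const (measure_lt_top _ _) fun t ht => ?_
    rw [Real.norm_eq_abs, abs_abs]
    exact (h (lt_of_le_of_lt ht hd)).le
  have h2 : νI.real (Metric.closedBall x ρ) ≤ 2 * ρ := by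
    calc νI.real (Metric.closedBall x ρ) ≤ volume.real (Metric.closedBall x ρ) := by
          refine ENNReal.toReal_mono measure_closedBall_lt_top.ne (Measure.restrict_apply_le _ _)
      _ = _ := by rw [Real.volume_real_closedBall hρ.le]
  rw [abs_mul, abs_of_pos (inv_pos.2 hρ), ← Real.norm_eq_abs]
  calc _ ≤ ρ⁻¹ * ((η / 4) * (2 * ρ)) := by gcongr; exact h1.trans (by gcongr)
    _ = η / 2 := by field_simp; ring
    _ < η := by linarith

lemma LP0_ae {f : ℝ → ℝ} (hf : Integrable f νI) : ∀ᵐ x ∂νI, LP0 (fun t => f t - f x) x := by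
  have hF : Integrable (indicator (Ioo (-1:ℝ) 1) f) volume := (integrable_indicator_iff measurableSet_Ioo).2 hf
  have h := IsUnifLocDoublingMeasure.ae_tendsto_average_norm_sub (μ := (volume : Measure ℝ)) hF.locallyIntegrable 1
  filter_upwards [ae_restrict_of_ae h, ae_restrict_mem measurableSet_Ioo] with x hx hxI
  have h1 := hx (l := nhdsWithin (0:ℝ) (Ioi 0)) (fun _ => x) (fun ρ => ρ) tendsto_id
    (by filter_upwards [self_mem_nhdsWithin] with ρ hρ
        have : 0 < ρ := hρ
        simp; exact this.le)
  have h2 := h1.const_mul 2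
  rw [mul_zero] at h2
  refine squeeze_zero' ?_ ?_ h2
  · filter_upwards [self_mem_nhdsWithin] with ρ hρ
    have : 0 < ρ := hρ
    exact mul_nonneg (by positivity) (integral_nonneg fun t => abs_nonneg _)
  · filter_upwards [self_mem_nhdsWithin] with ρ hρ
    have hρ : 0 < ρ := hρ
    rw [setAverage_eq, Real.volume_real_closedBall hρ.le, smul_eq_mul, mul_inv, ← mul_assoc, ← mul_assoc]
    rw [show (2:ℝ) * 2⁻¹ = 1 by norm_num, one_mul]
    refine mul_le_mul_of_nonneg_left ?_ (by positivity)
    have e : ∫ t in Metric.closedBall x ρ, |f t - f x| ∂νI =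
        ∫ t in Metric.closedBall x ρ ∩ Ioo (-1) 1, ‖indicator (Ioo (-1:ℝ) 1) f t - indicator (Ioo (-1:ℝ) 1) f x‖ := by
      rw [Measure.restrict_restrict measurableSet_closedBall]
      refine setIntegral_congr_fun (measurableSet_closedBall.inter measurableSet_Ioo) fun t ht => ?_
      simp only [indicator_of_mem ht.2, indicator_of_mem hxI, Real.norm_eq_abs]
    rw [e]
    refine setIntegral_mono_set ?_ (Eventually.of_forall fun t => norm_nonneg _)
      inter_subset_left.eventuallyLE
    refine Integrable.norm (hF.restrict.sub ?_)
    exact integrable_const_iff.2 (Or.inr ⟨by rw [Measure.restrict_apply_univ]; exact measure_closedBall_lt_top⟩)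

lemma dyadic {ε : ℝ} (hε : 0 < ε) (s : ℝ) (N : ℕ) :
    ε / (ε ^ 2 + s ^ 2) ≤ (∑ j ∈ Finset.range N, if |s| ≤ 2 ^ j * ε then 4 / (4 ^ j * ε) else 0) +
      4 / (4 ^ N * ε) := by
  induction N with
  | zero =>
    simp only [Finset.range_zero, Finset.sum_empty, pow_zero, zero_add, one_mul]
    rw [div_le_div_iff₀ (by positivity) hε]
    nlinarith [sq_nonneg s, sq_nonneg ε]
  | succ N ih =>
    rw [Finset.sum_range_succ]
    have hp : 0 < 4 / (4 ^ (N + 1) * ε) := by positivity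
    split_ifs with h
    · linarith
    · have h0 : 0 ≤ ∑ j ∈ Finset.range N, if |s| ≤ 2 ^ j * ε then 4 / (4 ^ j * ε) else 0 :=
        Finset.sum_nonneg fun j _ => by split_ifs <;> positivity
      have h1 : ε / (ε ^ 2 + s ^ 2) ≤ 4 / (4 ^ (N + 1) * ε) := by
        push Not at h
        have h2 : (2 ^ N * ε) ^ 2 ≤ s ^ 2 := by
          rw [← sq_abs s]; exact pow_le_pow_left₀ (by positivity) h.le 2
        have h3 : (2 ^ N * ε) ^ 2 = 4 ^ N * ε ^ 2 := by
          rw [mul_pow, ← pow_mul, mul_comm N 2, pow_mul]; norm_num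
        rw [h3] at h2
        rw [div_le_div_iff₀ (by positivity) (by positivity), pow_succ]
        nlinarith [sq_nonneg ε]
      linarith

lemma core_Q {f : ℝ → ℝ} {x : ℝ} (hf : Integrable f νI) (hx : LP0 f x) :
    Tendsto (fun ε : ℝ => ∫ t, ε / (ε ^ 2 + (t - x) ^ 2) * |f t| ∂νI) (nhdsWithin 0 (Ioi 0)) (nhds 0) := by
  rw [Metric.tendsto_nhdsWithin_nhds]
  intro η hη
  obtain ⟨δ, hδ, h⟩ := Metric.tendsto_nhdsWithin_nhds.1 hx (η / 32) (by positivity)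
  set M := ∫ t, |f t| ∂νI with hM
  have hM0 : 0 ≤ M := integral_nonneg fun t => abs_nonneg _
  set d := δ / 2 with hd
  have hd0 : 0 < d := by positivity
  have hm : ∀ ρ, 0 < ρ → ρ ≤ d → ∫ t in Metric.closedBall x ρ, |f t| ∂νI ≤ η / 32 * ρ := by
    intro ρ h0 h1
    have := h (x := ρ) h0 (by rw [Real.dist_eq, sub_zero, abs_of_pos h0]; linarith)
    rw [Real.dist_eq, sub_zero] at this
    have := (le_abs_self _).trans this.le
    rwa [inv_mul_le_iff₀ h0, mul_comm] at this
  refine ⟨min d (η * d ^ 2 / (64 * (M + 1))), by positivity, fun {ε} hε hε' => ?_⟩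
  have hε : 0 < ε := hε
  rw [Real.dist_eq, sub_zero] at hε' ⊢
  rw [abs_of_pos hε, lt_min_iff] at hε'
  obtain ⟨N, hN1, hN2⟩ := exists_nat_pow_near (x := d / ε) (y := (2:ℝ)) (by rw [le_div_iff₀ hε]; linarith) (by norm_num)
  rw [le_div_iff₀ hε] at hN1
  rw [div_lt_iff₀ hε, pow_succ] at hN2
  have hnn : ∀ t, 0 ≤ ε / (ε ^ 2 + (t - x) ^ 2) * |f t| := fun t => by positivity
  rw [abs_of_nonneg (integral_nonneg hnn)]
  have hint : ∀ j : ℕ, Integrable (fun t => (Metric.closedBall x (2 ^ j * ε)).indicator (fun t => 4 / (4 ^ j * ε) * |f t|) t) νI :=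
    fun j => (hf.abs.const_mul _).indicator measurableSet_closedBall
  calc ∫ t, ε / (ε ^ 2 + (t - x) ^ 2) * |f t| ∂νI
      ≤ ∫ t, ((∑ j ∈ Finset.range N, (Metric.closedBall x (2 ^ j * ε)).indicator (fun t => 4 / (4 ^ j * ε) * |f t|) t)
          + 4 / (4 ^ N * ε) * |f t|) ∂νI := by
        refine integral_mono_of_nonneg (Eventually.of_forall hnn)
          ((integrable_finsetSum _ fun j _ => hint j).add (hf.abs.const_mul _)) (Eventually.of_forall fun t => ?_)
        have := mul_le_mul_of_nonneg_right (dyadic hε (t - x) N) (abs_nonneg (f t))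
        refine this.trans (le_of_eq ?_)
        rw [add_mul, Finset.sum_mul]
        congr 1
        refine Finset.sum_congr rfl fun j _ => ?_
        by_cases hj : |t - x| ≤ 2 ^ j * ε
        · rw [if_pos hj, indicator_of_mem (by rwa [Metric.mem_closedBall, Real.dist_eq])]
        · rw [if_neg hj, indicator_of_notMem (by rwa [Metric.mem_closedBall, Real.dist_eq]), zero_mul]
    _ = (∑ j ∈ Finset.range N, 4 / (4 ^ j * ε) * ∫ t in Metric.closedBall x (2 ^ j * ε), |f t| ∂νI) + 4 / (4 ^ N * ε) * M := by
        rw [integral_add (integrable_finsetSum _ fun j _ => hint j) (hf.abs.const_mul _),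
          integral_finsetSum _ fun j _ => hint j, integral_const_mul]
        congr 1
        refine Finset.sum_congr rfl fun j _ => ?_
        rw [integral_indicator measurableSet_closedBall, integral_const_mul]
    _ ≤ (∑ j ∈ Finset.range N, η / 8 * (1 / 2) ^ j) + 16 * ε / d ^ 2 * M := by
        refine add_le_add (Finset.sum_le_sum fun j hj => ?_) ?_
        · have hj2 : (2:ℝ) ^ j ≤ 2 ^ N := pow_le_pow_right₀ (by norm_num) (Finset.mem_range.1 hj).le
          have := hm (2 ^ j * ε) (by positivity) (by nlinarith)
          calc _ ≤ 4 / (4 ^ j * ε) * (η / 32 * (2 ^ j * ε)) := by gcongr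
            _ = _ := by
              rw [show (4:ℝ) ^ j = 2 ^ j * 2 ^ j by rw [← mul_pow]; norm_num, div_pow, one_pow]; field_simp; norm_num
        · refine mul_le_mul_of_nonneg_right ?_ hM0
          have : d ^ 2 ≤ 4 * (4 ^ N * ε ^ 2) := by
            have e : (4:ℝ) * (4 ^ N * ε ^ 2) = (2 ^ N * 2 * ε) ^ 2 := by
              rw [show (4:ℝ) = 2 * 2 by norm_num, mul_pow]; ring
            rw [e]; exact pow_le_pow_left₀ hd0.le hN2.le 2
          rw [div_le_div_iff₀ (by positivity) (by positivity)]
          nlinarith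
    _ ≤ η / 4 + η / 4 := by
        refine add_le_add ?_ ?_
        · rw [← Finset.mul_sum]
          have : ∑ j ∈ Finset.range N, (1 / 2 : ℝ) ^ j ≤ 2 := by
            have := geom_sum_eq (x := (1/2:ℝ)) (by norm_num) N
            have h5 : (0:ℝ) < (1/2) ^ N := by positivity
            rw [this, show (((1:ℝ)/2) ^ N - 1) / (1/2 - 1) = 2 - 2 * (1/2) ^ N by
              rw [div_eq_iff (by norm_num)]; ring]
            linarith
          nlinarith
        · have h2 := hε'.2
          rw [lt_div_iff₀ (by positivity)] at h2
          rw [div_mul_eq_mul_div, div_le_iff₀ (by positivity)]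
          nlinarith
    _ < η := by linarith

/-- main transfer lemma -/
lemma transfer {k : ℝ → ℝ → ℝ} {f φ : ℝ → ℝ} {x C c L : ℝ}
    (hk : ∀ ε ∈ Ioc (0:ℝ) (1/2), AEStronglyMeasurable (k ε) νI)
    (hb : ∀ ε ∈ Ioc (0:ℝ) (1/2), ∀ t ∈ Ioo (-1:ℝ) 1, |k ε t| ≤ C * (ε / (ε ^ 2 + (t - x) ^ 2)))
    (hf : Integrable f νI) (hφ : Integrable φ νI)
    (hL : Tendsto (fun ε => ∫ t, k ε t * φ t ∂νI) (nhdsWithin 0 (Ioi 0)) (nhds L))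
    (hx : LP0 (fun t => f t - c * φ t) x) :
    Tendsto (fun ε => ∫ t, k ε t * f t ∂νI) (nhdsWithin 0 (Ioi 0)) (nhds (c * L)) := by
  have hu : Integrable (fun t => f t - c * φ t) νI := hf.sub (hφ.const_mul c)
  have hev : ∀ᶠ ε in nhdsWithin (0:ℝ) (Ioi 0), ε ∈ Ioc (0:ℝ) (1/2) :=
    Ioc_mem_nhdsGT (by norm_num)
  have hki : ∀ ε ∈ Ioc (0:ℝ) (1/2), ∀ v : ℝ → ℝ, Integrable v νI → Integrable (fun t => k ε t * v t) νI := by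
    intro ε hε v hv
    refine hv.bdd_mul (c := |C| / ε) (hk ε hε) ?_
    filter_upwards [ae_restrict_mem measurableSet_Ioo] with t ht
    refine (hb ε hε t ht).trans ?_
    have h0 := hε.1
    have : ε / (ε ^ 2 + (t - x) ^ 2) ≤ 1 / ε := by
      rw [div_le_div_iff₀ (by positivity) h0]; nlinarith [sq_nonneg (t - x)]
    calc C * (ε / (ε ^ 2 + (t - x) ^ 2)) ≤ |C| * (1 / ε) := by
          gcongr; exact le_abs_self C
      _ = _ := by ring
  have h1 : Tendsto (fun ε => ∫ t, k ε t * (f t - c * φ t) ∂νI) (nhdsWithin 0 (Ioi 0)) (nhds 0) := by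
    have h2 := (core_Q hu hx).const_mul C
    rw [mul_zero] at h2
    refine squeeze_zero_norm' ?_ h2
    filter_upwards [hev] with ε hε
    rw [← integral_const_mul]
    have h0 := hε.1
    refine norm_integral_le_of_norm_le ?_ ?_
    · refine Integrable.const_mul ?_ C
      refine hu.abs.bdd_mul (c := 1 / ε) (Continuous.aestronglyMeasurable ?_) (Eventually.of_forall fun t => ?_)
      · exact continuous_const.div (by fun_prop) fun t => by positivity
      · rw [Real.norm_of_nonneg (by positivity), div_le_div_iff₀ (by positivity) h0]
        nlinarith [sq_nonneg (t - x)]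
    · filter_upwards [ae_restrict_mem measurableSet_Ioo] with t ht
      rw [norm_mul, Real.norm_eq_abs, Real.norm_eq_abs, ← mul_assoc]
      exact mul_le_mul_of_nonneg_right (hb ε hε t ht) (abs_nonneg _)
  have h3 := h1.add (hL.const_mul c)
  rw [zero_add] at h3
  refine h3.congr' ?_
  filter_upwards [hev] with ε hε
  rw [← integral_const_mul, ← integral_add (hki ε hε _ hu) ((hki ε hε _ hφ).const_mul c)]
  refine integral_congr_ae (Eventually.of_forall fun t => ?_)
  simp only; ring

end HS

namespace HS

def Dn (x ε t : ℝ) : ℝ := 4 * (1 - ε) ^ 2 * (t - x) ^ 2 + ε ^ 2 * ((2 - ε) ^ 2 - 4 * (1 - ε) * x * t)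
def Pe (x ε t : ℝ) : ℝ := (1 - (1 - ε) ^ 2) * (1 + (1 - ε) ^ 2 - 2 * (1 - ε) * x * t) / Dn x ε t
def Po (x ε t : ℝ) : ℝ := 2 * (1 - ε) * (1 - (1 - ε) ^ 2) * √(1 - x ^ 2) / Dn x ε t
def Kc (Y : ℝ → ℝ) (x ε t : ℝ) : ℝ := 2 * (1 - ε) * (2 * (1 - ε) * (t - x) + ε ^ 2 * Y t) / Dn x ε t
def tr (x ε t : ℝ) : ℝ := if ε ≤ |t - x| then 1 / (t - x) else 0
def ko (x ε t : ℝ) : ℝ := 4 * (1 - ε) ^ 2 * (t - x) /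
  (4 * (1 - ε) ^ 2 * (t - x) ^ 2 + ε ^ 2 * ((2 - ε) ^ 2 - 4 * (1 - ε) * x ^ 2)) - tr x ε t

lemma Dn_lb {x ε t : ℝ} (hx : x ∈ Ioo (-1:ℝ) 1) (hε : ε ∈ Ioc (0:ℝ) (1/2)) (ht : t ∈ Ioo (-1:ℝ) 1) :
    (1 - |x|) * (ε ^ 2 + (t - x) ^ 2) ≤ Dn x ε t := by
  have hx1 : |x| < 1 := abs_lt.2 hx
  have ht1 : |t| < 1 := abs_lt.2 ht
  have hxt : x * t ≤ |x| := by
    calc x * t ≤ |x * t| := le_abs_self _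
      _ = |x| * |t| := abs_mul _ _
      _ ≤ |x| := mul_le_of_le_one_right (abs_nonneg _) ht1.le
  obtain ⟨h0, h1⟩ := hε
  have hb : 1 - |x| ≤ (2 - ε) ^ 2 - 4 * (1 - ε) * x * t := by
    nlinarith [sq_nonneg ε, mul_nonneg (sub_nonneg.2 h1) (sub_nonneg.2 hx1.le)]
  have hr : 1 - |x| ≤ 4 * (1 - ε) ^ 2 := by nlinarith [abs_nonneg x]
  unfold Dn
  have e1 := mul_le_mul_of_nonneg_right hb (sq_nonneg ε)
  have e2 := mul_le_mul_of_nonneg_right hr (sq_nonneg (t - x))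
  nlinarith

/-- turn a bound on the numerator into a bound on the kernel -/
lemma bd_of {x ε t C N : ℝ} (hx : x ∈ Ioo (-1:ℝ) 1) (hε : ε ∈ Ioc (0:ℝ) (1/2)) (ht : t ∈ Ioo (-1:ℝ) 1)
    {m : ℝ} (hN : |N| ≤ C * m) :
    |N / Dn x ε t| ≤ C / (1 - |x|) * (m / (ε ^ 2 + (t - x) ^ 2)) := by
  have hx1 : 0 < 1 - |x| := by have := abs_lt.2 hx; linarith
  have h0 := hε.1
  have hq : 0 < ε ^ 2 + (t - x) ^ 2 := by positivity
  have hl := Dn_lb hx hε ht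
  have hD : 0 < Dn x ε t := lt_of_lt_of_le (by positivity) hl
  rw [abs_div, abs_of_pos hD]
  calc |N| / Dn x ε t ≤ (C * m) / ((1 - |x|) * (ε ^ 2 + (t - x) ^ 2)) := by
        refine div_le_div₀ ((abs_nonneg _).trans hN) hN (by positivity) hl
    _ = _ := by field_simp

lemma Dn_pos {x ε t : ℝ} (hx : x ∈ Ioo (-1:ℝ) 1) (hε : ε ∈ Ioc (0:ℝ) (1/2)) (ht : t ∈ Ioo (-1:ℝ) 1) :
    0 < Dn x ε t := by
  have hx1 : 0 < 1 - |x| := by have := abs_lt.2 hx; linarith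
  have h0 := hε.1
  exact lt_of_lt_of_le (by positivity) (Dn_lb hx hε ht)

lemma Pe_bd {x ε t : ℝ} (hx : x ∈ Ioo (-1:ℝ) 1) (hε : ε ∈ Ioc (0:ℝ) (1/2)) (ht : t ∈ Ioo (-1:ℝ) 1) :
    |Pe x ε t| ≤ 8 / (1 - |x|) * (ε / (ε ^ 2 + (t - x) ^ 2)) := by
  refine bd_of hx hε ht ?_
  obtain ⟨h0, h1⟩ := hε
  have hxt : |x * t| ≤ 1 := by
    rw [abs_mul]; exact mul_le_one₀ (abs_lt.2 hx).le (abs_nonneg _) (abs_lt.2 ht).le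
  obtain ⟨a1, a2⟩ := abs_le.1 hxt
  have b1 : |1 - (1 - ε) ^ 2| ≤ 2 * ε := by rw [abs_le]; constructor <;> nlinarith
  have b2 : |1 + (1 - ε) ^ 2 - 2 * (1 - ε) * x * t| ≤ 4 := by rw [abs_le]; constructor <;> nlinarith
  rw [abs_mul]
  calc _ ≤ 2 * ε * 4 := mul_le_mul b1 b2 (abs_nonneg _) (by positivity)
    _ = _ := by ring

lemma Po_bd {x ε t : ℝ} (hx : x ∈ Ioo (-1:ℝ) 1) (hε : ε ∈ Ioc (0:ℝ) (1/2)) (ht : t ∈ Ioo (-1:ℝ) 1) :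
    |Po x ε t| ≤ 4 / (1 - |x|) * (ε / (ε ^ 2 + (t - x) ^ 2)) := by
  refine bd_of hx hε ht ?_
  obtain ⟨h0, h1⟩ := hε
  have b1 : |1 - (1 - ε) ^ 2| ≤ 2 * ε := by rw [abs_le]; constructor <;> nlinarith
  have b2 : |√(1 - x ^ 2)| ≤ 1 := by
    rw [abs_of_nonneg (Real.sqrt_nonneg _)]; exact Real.sqrt_le_one.mpr (by nlinarith [sq_nonneg x])
  have b3 : |2 * (1 - ε)| ≤ 2 := by rw [abs_le]; constructor <;> nlinarith
  rw [abs_mul, abs_mul]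
  calc _ ≤ 2 * (2 * ε) * 1 := by gcongr
    _ = _ := by ring

lemma K_bd {Y : ℝ → ℝ} {x ε t : ℝ} (hx : x ∈ Ioo (-1:ℝ) 1) (hε : ε ∈ Ioc (0:ℝ) (1/2)) (ht : t ∈ Ioo (-1:ℝ) 1)
    (hY : |Y t| ≤ 1) :
    |Kc Y x ε t - tr x ε t| ≤ 12 / (1 - |x|) * (ε / (ε ^ 2 + (t - x) ^ 2)) := by
  have hD := Dn_pos hx hε ht
  have h0 := hε.1
  have h1 := hε.2
  have b3 : |2 * (1 - ε)| ≤ 2 := by rw [abs_le]; constructor <;> nlinarith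
  have b4 : |ε ^ 2 * Y t| ≤ ε ^ 2 := by
    rw [abs_mul, abs_of_nonneg (sq_nonneg ε)]; exact mul_le_of_le_one_right (sq_nonneg _) hY
  unfold tr
  split_ifs with h
  · have hs : t - x ≠ 0 := by intro h'; rw [h'] at h; simp at h; linarith
    have hs' : |t - x| ≤ 2 := by rw [abs_le]; constructor <;> linarith [hx.1, hx.2, ht.1, ht.2]
    have e : Kc Y x ε t - 1 / (t - x) =
        (ε ^ 2 * (2 * (1 - ε) * Y t * (t - x) - ((2 - ε) ^ 2 - 4 * (1 - ε) * x * t)) / (t - x)) / Dn x ε t := by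
      unfold Kc
      have hD' := hD.ne'
      field_simp
      unfold Dn
      ring
    rw [e]
    refine bd_of hx hε ht ?_
    have hxt : |x * t| ≤ 1 := by
      rw [abs_mul]; exact mul_le_one₀ (abs_lt.2 hx).le (abs_nonneg _) (abs_lt.2 ht).le
    have c1 : |2 * (1 - ε) * Y t * (t - x)| ≤ 4 := by
      rw [abs_mul, abs_mul (2 * (1 - ε))]
      calc |2 * (1 - ε)| * |Y t| * |t - x| ≤ 2 * 1 * 2 := by gcongr
        _ = 4 := by norm_num
    obtain ⟨a1, a2⟩ := abs_le.1 hxt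
    obtain ⟨a3, a4⟩ := abs_le.1 c1
    have c2 : |2 * (1 - ε) * Y t * (t - x) - ((2 - ε) ^ 2 - 4 * (1 - ε) * x * t)| ≤ 12 := by
      rw [abs_le]; constructor <;> nlinarith
    rw [abs_div, abs_mul, abs_of_nonneg (sq_nonneg ε), div_le_iff₀ (abs_pos.2 hs)]
    calc _ ≤ ε ^ 2 * 12 := by gcongr
      _ = 12 * ε * ε := by ring
      _ ≤ _ := by gcongr
  · push Not at h
    rw [sub_zero]
    unfold Kc
    refine bd_of hx hε ht ?_
    rw [abs_mul]
    have c1 : |2 * (1 - ε) * (t - x) + ε ^ 2 * Y t| ≤ 2 * ε + ε ^ 2 := by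
      refine (abs_add_le _ _).trans (add_le_add ?_ b4)
      rw [abs_mul]; gcongr
    calc _ ≤ 2 * (2 * ε + ε ^ 2) := by gcongr
      _ ≤ _ := by nlinarith

lemma err_bd {Y : ℝ → ℝ} {x ε t : ℝ} (hx : x ∈ Ioo (-1:ℝ) 1) (hε : ε ∈ Ioc (0:ℝ) (1/2)) (ht : t ∈ Ioo (-1:ℝ) 1)
    (hY : |Y t| ≤ 1) :
    |Kc Y x ε t - tr x ε t - ko x ε t| ≤ 18 / (1 - |x|) * (ε ^ 2 / (ε ^ 2 + (t - x) ^ 2)) := by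
  have hD := Dn_pos hx hε ht
  have h0 := hε.1
  have h1 := hε.2
  have hw : 0 < 1 - x ^ 2 := by nlinarith [hx.1, hx.2]
  set D0 := 4 * (1 - ε) ^ 2 * (t - x) ^ 2 + ε ^ 2 * ((2 - ε) ^ 2 - 4 * (1 - ε) * x ^ 2) with hD0
  have hpos : 0 < ε ^ 2 * ((2 - ε) ^ 2 - 4 * (1 - ε) * x ^ 2) := by
    refine mul_pos (by positivity) ?_
    nlinarith [mul_pos (by linarith : 0 < 1 - ε) hw, sq_nonneg ε]
  have hge : (t - x) ^ 2 ≤ D0 := by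
    have : 1 ≤ 4 * (1 - ε) ^ 2 := by nlinarith
    nlinarith [mul_le_mul_of_nonneg_right this (sq_nonneg (t - x))]
  have hD0p : 0 < D0 := by
    have : 0 ≤ 4 * (1 - ε) ^ 2 * (t - x) ^ 2 := by positivity
    linarith
  have e : Kc Y x ε t - tr x ε t - ko x ε t =
      (ε ^ 2 * (2 * (1 - ε) * Y t + 16 * (1 - ε) ^ 3 * x * ((t - x) ^ 2 / D0))) / Dn x ε t := by
    have hDD : Dn x ε t = D0 - 4 * (1 - ε) * ε ^ 2 * x * (t - x) := by rw [hD0, Dn]; ring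
    unfold Kc ko
    rw [← hD0, sub_sub_sub_cancel_right]
    have n1 := hD.ne'
    have n2 := hD0p.ne'
    clear_value D0
    generalize Dn x ε t = D at hDD n1 ⊢
    field_simp
    linear_combination (-4 * (1 - ε) ^ 2 * (t - x)) * hDD
  rw [e]
  refine bd_of hx hε ht ?_
  rw [abs_mul, abs_of_nonneg (sq_nonneg ε), mul_comm]
  refine mul_le_mul_of_nonneg_right ?_ (sq_nonneg _)
  have b3 : |2 * (1 - ε)| ≤ 2 := by rw [abs_le]; constructor <;> nlinarith
  have b5 : |(t - x) ^ 2 / D0| ≤ 1 := by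
    rw [abs_of_nonneg (by positivity)]; exact (div_le_one hD0p).2 hge
  have b6 : |16 * (1 - ε) ^ 3| ≤ 16 := by
    rw [abs_of_nonneg (by have : 0 ≤ 1 - ε := by linarith
                          positivity)]
    have : (1 - ε) ^ 3 ≤ 1 := pow_le_one₀ (by linarith) (by linarith)
    linarith
  refine (abs_add_le _ _).trans ?_
  rw [abs_mul (2 * (1 - ε)), abs_mul (16 * (1 - ε) ^ 3 * x), abs_mul (16 * (1 - ε) ^ 3)]
  have := (abs_lt.2 hx).le
  calc |2 * (1 - ε)| * |Y t| + |16 * (1 - ε) ^ 3| * |x| * |(t - x) ^ 2 / D0|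
      ≤ 2 * 1 + 16 * 1 * 1 := by gcongr
    _ = _ := by norm_num

lemma tr_meas (x ε : ℝ) : Measurable (tr x ε) := by
  unfold tr
  refine Measurable.ite ?_ (by fun_prop) measurable_const
  exact measurableSet_le measurable_const (by fun_prop)

lemma Kc_meas {Y : ℝ → ℝ} (hY : Measurable Y) (x ε : ℝ) : Measurable (Kc Y x ε) := by
  unfold Kc Dn; fun_prop

lemma ko_meas (x ε : ℝ) : Measurable (ko x ε) := by
  have := tr_meas x ε
  unfold ko; fun_prop

lemma ko_odd (x ε t : ℝ) : ko x ε (2 * x - t) = - ko x ε t := by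
  have h : (2 * x - t) - x = -(t - x) := by ring
  unfold ko tr
  rw [h, abs_neg, neg_sq]
  split_ifs
  · rw [div_neg]; ring
  · ring

lemma const_lim {Y : ℝ → ℝ} {x : ℝ} (hx : x ∈ Ioo (-1:ℝ) 1) (hYm : Measurable Y)
    (hY : ∀ t ∈ Ioo (-1:ℝ) 1, |Y t| ≤ 1) :
    Tendsto (fun ε => ∫ t, (Kc Y x ε t - tr x ε t) *
      indicator (Ioo (x - (1 - |x|)) (x + (1 - |x|))) (fun _ => (1:ℝ)) t ∂νI)
      (nhdsWithin 0 (Ioi 0)) (nhds 0) := by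
  set A := Ioo (x - (1 - |x|)) (x + (1 - |x|)) with hA
  have hAm : MeasurableSet A := measurableSet_Ioo
  have hx1 : 0 < 1 - |x| := by have := abs_lt.2 hx; linarith
  have hAI : A ⊆ Ioo (-1:ℝ) 1 := by
    intro t ht
    have := neg_abs_le x
    have := le_abs_self x
    constructor <;> linarith [ht.1, ht.2]
  have hev : ∀ᶠ ε in nhdsWithin (0:ℝ) (Ioi 0), ε ∈ Ioc (0:ℝ) (1/2) :=
    Ioc_mem_nhdsGT (by norm_num)
  have hodd : ∀ ε, ∫ t in A, ko x ε t = 0 := by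
    intro ε
    rw [← integral_indicator hAm]
    have h1 := integral_sub_left_eq_self (A.indicator (ko x ε)) volume (2 * x)
    have h2 : (fun t => A.indicator (ko x ε) (2 * x - t)) = fun t => - A.indicator (ko x ε) t := by
      ext t
      by_cases ht : t ∈ A
      · rw [indicator_of_mem ht, indicator_of_mem (by constructor <;> linarith [ht.1, ht.2]), ko_odd]
      · rw [indicator_of_notMem ht, indicator_of_notMem, neg_zero]
        intro h; exact ht (by constructor <;> linarith [h.1, h.2])
    rw [h2, integral_neg] at h1
    linarith
  have hbase : Tendsto (fun ε : ℝ => ∫ t in A, 18 / (1 - |x|) * (ε ^ 2 / (ε ^ 2 + (t - x) ^ 2)))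
      (nhdsWithin 0 (Ioi 0)) (nhds 0) := by
    have h0 : Tendsto (fun ε : ℝ => ∫ t in A, (ε ^ 2 / (ε ^ 2 + (t - x) ^ 2)))
        (nhdsWithin 0 (Ioi 0)) (nhds (∫ t in A, (0:ℝ))) := by
      refine tendsto_integral_filter_of_dominated_convergence (fun _ => 1) ?_ ?_ ?_ ?_
      · exact Eventually.of_forall fun ε => Measurable.aestronglyMeasurable (by fun_prop)
      · refine Eventually.of_forall fun ε => Eventually.of_forall fun t => ?_
        rw [Real.norm_of_nonneg (by positivity)]
        exact div_le_one_of_le₀ (by nlinarith [sq_nonneg (t - x)]) (by positivity)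
      · exact integrable_const_iff.2 (Or.inr ⟨by rw [Measure.restrict_apply_univ]; exact measure_Ioo_lt_top⟩)
      · have : ∀ᵐ t ∂(volume.restrict A), t ≠ x := ae_restrict_of_ae (Measure.ae_ne volume x)
        filter_upwards [this] with t ht
        have hs : (t - x) ^ 2 ≠ 0 := pow_ne_zero _ (sub_ne_zero.2 ht)
        have : ContinuousAt (fun ε : ℝ => ε ^ 2 / (ε ^ 2 + (t - x) ^ 2)) 0 := by
          refine ContinuousAt.div (by fun_prop) (by fun_prop) (by simpa using hs)
        have := this.tendsto
        simp only [ne_eq, OfNat.ofNat_ne_zero, not_false_eq_true, zero_pow, zero_add, zero_div] at this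
        exact this.mono_left nhdsWithin_le_nhds
    simp only [integral_zero] at h0
    simp_rw [integral_const_mul]
    simpa using h0.const_mul (18 / (1 - |x|))
  refine squeeze_zero_norm' ?_ hbase
  filter_upwards [hev] with ε hε
  have h0 := hε.1
  have hfin : IsFiniteMeasure (volume.restrict A) :=
    ⟨by rw [Measure.restrict_apply_univ]; exact measure_Ioo_lt_top⟩
  have m1 := Kc_meas hYm x ε
  have m2 := tr_meas x ε
  have m3 := ko_meas x ε
  have i0 : Integrable (fun t => 18 / (1 - |x|) * (ε ^ 2 / (ε ^ 2 + (t - x) ^ 2))) (volume.restrict A) := by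
    refine Integrable.const_mul ?_ _
    refine Integrable.of_bound (C := 1) (Measurable.aestronglyMeasurable (by fun_prop)) (Eventually.of_forall fun t => ?_)
    rw [Real.norm_of_nonneg (by positivity)]
    exact div_le_one_of_le₀ (by nlinarith [sq_nonneg (t - x)]) (by positivity)
  have be : ∀ᵐ t ∂(volume.restrict A), ‖Kc Y x ε t - tr x ε t - ko x ε t‖ ≤
      18 / (1 - |x|) * (ε ^ 2 / (ε ^ 2 + (t - x) ^ 2)) := by
    filter_upwards [ae_restrict_mem hAm] with t ht
    exact err_bd hx hε (hAI ht) (hY t (hAI ht))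
  have i1 : Integrable (fun t => Kc Y x ε t - tr x ε t - ko x ε t) (volume.restrict A) :=
    i0.mono' (Measurable.aestronglyMeasurable (by fun_prop)) be
  have i2 : Integrable (fun t => Kc Y x ε t - tr x ε t) (volume.restrict A) := by
    refine Integrable.of_bound (C := 12 / (1 - |x|) * (1 / ε)) (Measurable.aestronglyMeasurable (by fun_prop)) ?_
    filter_upwards [ae_restrict_mem hAm] with t ht
    refine (K_bd hx hε (hAI ht) (hY t (hAI ht))).trans ?_
    refine mul_le_mul_of_nonneg_left ?_ (by positivity)
    rw [div_le_div_iff₀ (by positivity) h0]; nlinarith [sq_nonneg (t - x)]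
  have i3 : Integrable (ko x ε) (volume.restrict A) := by
    refine (i2.sub i1).congr (Eventually.of_forall fun t => ?_)
    simp
  have e1 : ∫ t, (Kc Y x ε t - tr x ε t) * indicator A (fun _ => (1:ℝ)) t ∂νI =
      ∫ t in A, (Kc Y x ε t - tr x ε t - ko x ε t) := by
    have : ∀ t, (Kc Y x ε t - tr x ε t) * indicator A (fun _ => (1:ℝ)) t =
        indicator A (fun t => Kc Y x ε t - tr x ε t) t := by
      intro t
      by_cases ht : t ∈ A
      · rw [indicator_of_mem ht, indicator_of_mem ht, mul_one]
      · rw [indicator_of_notMem ht, indicator_of_notMem ht, mul_zero]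
    simp_rw [this]
    rw [integral_indicator hAm, Measure.restrict_restrict hAm, inter_eq_left.2 hAI,
      integral_sub i2 i3, hodd, sub_zero]
  rw [e1]
  exact norm_integral_le_of_norm_le i0 be

/-- truncated versus conjugate kernel -/
lemma trunc_lim {Y f : ℝ → ℝ} {x : ℝ} (hx : x ∈ Ioo (-1:ℝ) 1) (hYm : Measurable Y)
    (hY : ∀ t ∈ Ioo (-1:ℝ) 1, |Y t| ≤ 1) (hf : Integrable f νI) (hL : LP0 (fun t => f t - f x) x) :
    Tendsto (fun ε => ∫ t, (Kc Y x ε t - tr x ε t) * f t ∂νI) (nhdsWithin 0 (Ioi 0)) (nhds 0) := by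
  have hx1 : 0 < 1 - |x| := by have := abs_lt.2 hx; linarith
  set φ := indicator (Ioo (x - (1 - |x|)) (x + (1 - |x|))) (fun _ => (1:ℝ)) with hφ
  have hφi : Integrable φ νI := (integrable_const _).indicator measurableSet_Ioo
  have hmem : x ∈ Ioo (x - (1 - |x|)) (x + (1 - |x|)) := ⟨by linarith, by linarith⟩
  have hφx : φ x = 1 := by rw [hφ, indicator_of_mem hmem]
  have hφc : ContinuousAt φ x := by
    have : φ =ᶠ[nhds x] fun _ => 1 := by
      filter_upwards [isOpen_Ioo.mem_nhds hmem] with t ht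
      rw [hφ, indicator_of_mem ht]
    exact continuousAt_const.congr this.symm
  have := transfer (k := fun ε t => Kc Y x ε t - tr x ε t) (c := f x)
    (fun ε _ => ((Kc_meas hYm x ε).sub (tr_meas x ε)).aestronglyMeasurable)
    (fun ε hε t ht => K_bd hx hε ht (hY t ht)) hf hφi (const_lim hx hYm hY) ?_
  · simpa using this
  · refine LP0_of_le (C := |f x|) hL (LP0_cont hφc) (hf.sub (integrable_const _)) (hφi.sub (integrable_const _)) fun t => ?_
    rw [hφx, ← abs_mul]
    calc _ = |(f t - f x) - (f x * (φ t - 1))| := by ring_nf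
      _ ≤ _ := abs_sub _ _

end HS

namespace HS

def zz (x ε : ℝ) : ℂ := ((1 - ε) * x : ℝ) + ((1 - ε) * √(1 - x ^ 2) : ℝ) * Complex.I

lemma zz_norm {x ε : ℝ} (hx : x ∈ Ioo (-1:ℝ) 1) (hε : ε ∈ Ioc (0:ℝ) (1/2)) : ‖zz x ε‖ < 1 := by
  have hw : √(1 - x ^ 2) ^ 2 = 1 - x ^ 2 := Real.sq_sqrt (by nlinarith [hx.1, hx.2])
  rw [zz, Complex.norm_add_mul_I, Real.sqrt_lt' one_pos]
  have : ((1 - ε) * x) ^ 2 + ((1 - ε) * √(1 - x ^ 2)) ^ 2 = (1 - ε) ^ 2 := by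
    linear_combination (1 - ε) ^ 2 * hw
  rw [this]
  nlinarith [hε.1, hε.2]

lemma cdiv (a b c d : ℝ) (h : a ^ 2 + b ^ 2 ≠ 0) :
    ((c : ℂ) + d * Complex.I) / ((a : ℂ) + b * Complex.I) =
      (((c * a + d * b) / (a ^ 2 + b ^ 2) : ℝ) : ℂ) + (((d * a - c * b) / (a ^ 2 + b ^ 2) : ℝ) : ℂ) * Complex.I := by
  have hne : (a : ℂ) + b * Complex.I ≠ 0 := by
    intro h0
    have h1 := congrArg Complex.re h0
    have h2 := congrArg Complex.im h0
    simp at h1 h2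
    rw [h1, h2] at h; simp at h
  have hc : (a : ℂ) ^ 2 + b ^ 2 ≠ 0 := by exact_mod_cast h
  rw [div_eq_iff hne]
  push_cast
  field_simp
  linear_combination (-(d * a * b - c * b ^ 2 : ℂ)) * Complex.I_sq

lemma E_form {x ε t : ℝ} (hx : x ∈ Ioo (-1:ℝ) 1) :
    1 - 2 * zz x ε * t + zz x ε ^ 2 =
      ((1 - 2 * (1 - ε) * x * t + (1 - ε) ^ 2 * (2 * x ^ 2 - 1) : ℝ) : ℂ) +
        ((2 * (1 - ε) * √(1 - x ^ 2) * ((1 - ε) * x - t) : ℝ) : ℂ) * Complex.I ∧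
    (1 - 2 * (1 - ε) * x * t + (1 - ε) ^ 2 * (2 * x ^ 2 - 1)) ^ 2 +
      (2 * (1 - ε) * √(1 - x ^ 2) * ((1 - ε) * x - t)) ^ 2 = Dn x ε t ∧
    1 - zz x ε ^ 2 = ((1 - (1 - ε) ^ 2 * (2 * x ^ 2 - 1) : ℝ) : ℂ) +
      ((-2 * (1 - ε) ^ 2 * x * √(1 - x ^ 2) : ℝ) : ℂ) * Complex.I ∧
    √(1 - x ^ 2) ^ 2 = 1 - x ^ 2 := by
  have hw : √(1 - x ^ 2) ^ 2 = 1 - x ^ 2 := Real.sq_sqrt (by nlinarith [hx.1, hx.2])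
  unfold zz Dn
  generalize √(1 - x ^ 2) = w at hw ⊢
  have hwc : (w : ℂ) ^ 2 = 1 - x ^ 2 := by exact_mod_cast hw
  refine ⟨?_, ?_, ?_, hw⟩
  · push_cast
    linear_combination ((1 - ε) ^ 2 * w ^ 2 : ℂ) * Complex.I_sq - (1 - ε) ^ 2 * hwc
  · linear_combination (4 * (1 - ε) ^ 2 * ((1 - ε) * x - t) ^ 2) * hw
  · push_cast
    linear_combination -((1 - ε) ^ 2 * w ^ 2 : ℂ) * Complex.I_sq + (1 - ε) ^ 2 * hwc

lemma ker1 {x ε t : ℝ} (hx : x ∈ Ioo (-1:ℝ) 1) (hε : ε ∈ Ioc (0:ℝ) (1/2)) (ht : t ∈ Ioo (-1:ℝ) 1) :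
    (1 - zz x ε ^ 2) / (1 - 2 * zz x ε * t + zz x ε ^ 2) =
      (Pe x ε t : ℂ) + ((√(1 - x ^ 2) * Kc (fun t => t) x ε t : ℝ) : ℂ) * Complex.I := by
  obtain ⟨h1, h2, h3, hw⟩ := E_form (x := x) (ε := ε) (t := t) hx
  have hD := (Dn_pos hx hε ht).ne'
  rw [h1, h3, cdiv _ _ _ _ (by rw [h2]; exact hD), h2]
  congr 3
  · linear_combination (-4 * (1 - ε) ^ 3 * x * ((1 - ε) * x - t)) * hw
  · unfold Kc; rw [mul_div_assoc']; congr 1; ring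

lemma ker2 {x ε t : ℝ} (hx : x ∈ Ioo (-1:ℝ) 1) (hε : ε ∈ Ioc (0:ℝ) (1/2)) (ht : t ∈ Ioo (-1:ℝ) 1) :
    2 * zz x ε / (1 - 2 * zz x ε * t + zz x ε ^ 2) =
      ((- Kc (fun _ => - x) x ε t : ℝ) : ℂ) + (Po x ε t : ℂ) * Complex.I := by
  obtain ⟨h1, h2, h3, hw⟩ := E_form (x := x) (ε := ε) (t := t) hx
  have hD := (Dn_pos hx hε ht).ne'
  have h4 : 2 * zz x ε = ((2 * (1 - ε) * x : ℝ) : ℂ) + ((2 * (1 - ε) * √(1 - x ^ 2) : ℝ) : ℂ) * Complex.I := by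
    unfold zz; push_cast; ring
  rw [h1, h4, cdiv _ _ _ _ (by rw [h2]; exact hD), h2]
  congr 3
  · unfold Kc; rw [← neg_div]; congr 1
    linear_combination (4 * (1 - ε) ^ 2 * ((1 - ε) * x - t)) * hw
  · unfold Po; congr 1
    ring

lemma int_parts {F : ℝ → ℂ} {u v : ℝ → ℝ} (hF : Integrable F νI)
    (h : ∀ t ∈ Ioo (-1:ℝ) 1, F t = (u t : ℂ) + (v t : ℂ) * Complex.I) :
    (∫ t, F t ∂νI).re = ∫ t, u t ∂νI ∧ (∫ t, F t ∂νI).im = ∫ t, v t ∂νI := by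
  constructor
  · have := integral_re (𝕜 := ℂ) hF
    refine Eq.trans this.symm (integral_congr_ae ?_)
    filter_upwards [ae_restrict_mem measurableSet_Ioo] with t ht
    rw [h t ht]; simp
  · have := integral_im (𝕜 := ℂ) hF
    refine Eq.trans this.symm (integral_congr_ae ?_)
    filter_upwards [ae_restrict_mem measurableSet_Ioo] with t ht
    rw [h t ht]; simp

lemma parts1 {f : ℝ → ℝ} {x ε : ℝ} (hf : Integrable f νI) (hx : x ∈ Ioo (-1:ℝ) 1) (hε : ε ∈ Ioc (0:ℝ) (1/2)) :
    (∫ t, (f t : ℂ) * ((1 - zz x ε ^ 2) / (1 - 2 * zz x ε * t + zz x ε ^ 2)) ∂νI).re =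
      ∫ t, Pe x ε t * f t ∂νI ∧
    (∫ t, (f t : ℂ) * ((1 - zz x ε ^ 2) / (1 - 2 * zz x ε * t + zz x ε ^ 2)) ∂νI).im =
      √(1 - x ^ 2) * ∫ t, Kc (fun t => t) x ε t * f t ∂νI := by
  rw [← integral_const_mul]
  refine int_parts (integrable_ker hf (cosker_cont (zz_norm hx hε))) fun t ht => ?_
  rw [ker1 hx hε ht]; push_cast; ring

lemma parts2 {f : ℝ → ℝ} {x ε : ℝ} (hf : Integrable f νI) (hx : x ∈ Ioo (-1:ℝ) 1) (hε : ε ∈ Ioc (0:ℝ) (1/2)) :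
    (∫ t, (f t : ℂ) * (2 * zz x ε * (√(1 - t ^ 2) : ℝ) / (1 - 2 * zz x ε * t + zz x ε ^ 2)) ∂νI).re =
      - ∫ t, Kc (fun _ => -x) x ε t * (√(1 - t ^ 2) * f t) ∂νI ∧
    (∫ t, (f t : ℂ) * (2 * zz x ε * (√(1 - t ^ 2) : ℝ) / (1 - 2 * zz x ε * t + zz x ε ^ 2)) ∂νI).im =
      ∫ t, Po x ε t * (√(1 - t ^ 2) * f t) ∂νI := by
  rw [← integral_neg]
  refine int_parts (integrable_ker hf (sinker_cont (zz_norm hx hε))) fun t ht => ?_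
  rw [mul_div_right_comm, ker2 hx hε ht]; push_cast; ring

lemma w_bdd_int {g : ℝ → ℝ} (hg : Integrable g νI) : Integrable (fun t => √(1 - t ^ 2) * g t) νI := by
  refine hg.bdd_mul (c := 1) (Continuous.aestronglyMeasurable (by fun_prop)) (Eventually.of_forall fun t => ?_)
  rw [Real.norm_of_nonneg (Real.sqrt_nonneg _)]
  exact Real.sqrt_le_one.mpr (by nlinarith [sq_nonneg t])

lemma Kc_int {Y f : ℝ → ℝ} {x ε : ℝ} (hx : x ∈ Ioo (-1:ℝ) 1) (hε : ε ∈ Ioc (0:ℝ) (1/2)) (hYm : Measurable Y)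
    (hY : ∀ t ∈ Ioo (-1:ℝ) 1, |Y t| ≤ 1) (hf : Integrable f νI) :
    Integrable (fun t => (Kc Y x ε t - tr x ε t) * f t) νI ∧ Integrable (fun t => tr x ε t * f t) νI := by
  have h0 := hε.1
  have hx1 : 0 < 1 - |x| := by have := abs_lt.2 hx; linarith
  constructor
  · refine hf.bdd_mul (c := 12 / (1 - |x|) * (1 / ε))
      ((Kc_meas hYm x ε).sub (tr_meas x ε)).aestronglyMeasurable ?_
    filter_upwards [ae_restrict_mem measurableSet_Ioo] with t ht
    refine (K_bd hx hε ht (hY t ht)).trans ?_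
    refine mul_le_mul_of_nonneg_left ?_ (by positivity)
    rw [div_le_div_iff₀ (by positivity) h0]; nlinarith [sq_nonneg (t - x)]
  · refine hf.bdd_mul (c := 1 / ε) (tr_meas x ε).aestronglyMeasurable (Eventually.of_forall fun t => ?_)
    unfold tr
    split_ifs with h
    · rw [Real.norm_eq_abs, abs_div, abs_one]
      exact one_div_le_one_div_of_le h0 h
    · simp; exact h0.le

lemma trunc_eq {Y f : ℝ → ℝ} {x L : ℝ} (hx : x ∈ Ioo (-1:ℝ) 1) (hYm : Measurable Y)
    (hY : ∀ t ∈ Ioo (-1:ℝ) 1, |Y t| ≤ 1) (hf : Integrable f νI) (hL : LP0 (fun t => f t - f x) x)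
    (hlim : Tendsto (fun ε => ∫ t, Kc Y x ε t * f t ∂νI) (nhdsWithin 0 (Ioi 0)) (nhds L)) :
    Tendsto (fun ε => ∫ t, tr x ε t * f t ∂νI) (nhdsWithin 0 (Ioi 0)) (nhds L) := by
  have h1 := hlim.sub (trunc_lim hx hYm hY hf hL)
  rw [sub_zero] at h1
  refine h1.congr' ?_
  have hev : ∀ᶠ ε in nhdsWithin (0:ℝ) (Ioi 0), ε ∈ Ioc (0:ℝ) (1/2) := Ioc_mem_nhdsGT (by norm_num)
  filter_upwards [hev] with ε hε
  obtain ⟨i1, i2⟩ := Kc_int hx hε hYm hY hf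
  have : ∫ t, Kc Y x ε t * f t ∂νI = ∫ t, ((Kc Y x ε t - tr x ε t) * f t + tr x ε t * f t) ∂νI := by
    refine integral_congr_ae (Eventually.of_forall fun t => ?_)
    simp only; ring
  rw [this, integral_add i1 i2]; ring

lemma real_main {g : ℝ → ℝ} (hg : AEStronglyMeasurable g νI)
    (hg' : Integrable (fun t => |g t| * Real.posLog |g t|) νI) :
    ∃ h : ℝ → ℝ, Integrable h νI ∧ ∫ t, h t ∂νI = 0 ∧ ∀ᵐ x ∂νI,
      Tendsto (fun ε => ∫ t, tr x ε t * (√(1 - t ^ 2) * g t) ∂νI) (nhdsWithin 0 (Ioi 0))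
        (nhds (-(Real.pi * (√(1 - x ^ 2) * h x)))) ∧
      Tendsto (fun ε => ∫ t, tr x ε t * h t ∂νI) (nhdsWithin 0 (Ioi 0)) (nhds (Real.pi * g x)) := by
  have hgi := phi_int hg hg'
  obtain ⟨h, hh, hm⟩ := exists_h hg hg'
  obtain ⟨h0, hst⟩ := star hgi hh hm
  refine ⟨h, hh, h0, ?_⟩
  have hwg := w_bdd_int hgi
  filter_upwards [LP0_ae hh, LP0_ae hwg, ae_restrict_mem measurableSet_Ioo] with x lh lwg hx
  have hev : ∀ᶠ ε in nhdsWithin (0:ℝ) (Ioi 0), ε ∈ Ioc (0:ℝ) (1/2) := Ioc_mem_nhdsGT (by norm_num)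
  have hw0 : 0 < √(1 - x ^ 2) := Real.sqrt_pos.2 (by nlinarith [hx.1, hx.2])
  have hwc : ContinuousAt (fun t : ℝ => √(1 - t ^ 2)) x := by fun_prop
  have hwi : Integrable (fun t : ℝ => √(1 - t ^ 2)) νI := by
    simpa using w_bdd_int (g := fun _ => 1) (integrable_const _)
  have hvc : ContinuousAt (fun t : ℝ => 1 / √(1 - t ^ 2)) x := continuousAt_const.div hwc hw0.ne'
  -- Poisson limits
  have l1 : Tendsto (fun ε => ∫ t, Pe x ε t * h t ∂νI) (nhdsWithin 0 (Ioi 0))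
      (nhds (√(1 - x ^ 2) * h x * Real.pi)) := by
    refine transfer (φ := fun t => 1 / √(1 - t ^ 2)) (C := 8 / (1 - |x|))
      (fun ε _ => Measurable.aestronglyMeasurable (by unfold Pe Dn; fun_prop))
      (fun ε hε t ht => Pe_bd hx hε ht) hh winv_int ?_ ?_
    · refine tendsto_const_nhds.congr' ?_
      filter_upwards [hev] with ε hε
      rw [← (parts1 winv_int hx hε).1, cal1 (zz_norm hx hε)]; simp
    · refine LP0_of_le (C := |√(1 - x ^ 2) * h x|) lh (LP0_cont hvc) (hh.sub (integrable_const _))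
        (winv_int.sub (integrable_const _)) fun t => ?_
      rw [← abs_mul]
      calc _ = |(h t - h x) - (√(1 - x ^ 2) * h x * (1 / √(1 - t ^ 2) - 1 / √(1 - x ^ 2)))| := by
            congr 1
            have : √(1 - x ^ 2) * (1 / √(1 - x ^ 2)) = 1 := by field_simp
            linear_combination (- h x) * this
        _ ≤ _ := abs_sub _ _
  have l2 : Tendsto (fun ε => ∫ t, Po x ε t * (√(1 - t ^ 2) * g t) ∂νI) (nhdsWithin 0 (Ioi 0))
      (nhds (g x * (Real.pi * √(1 - x ^ 2)))) := by
    refine transfer (φ := fun t => √(1 - t ^ 2)) (C := 4 / (1 - |x|))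
      (fun ε _ => Measurable.aestronglyMeasurable (by unfold Po Dn; fun_prop))
      (fun ε hε t ht => Po_bd hx hε ht) hwg hwi ?_ ?_
    · have : Tendsto (fun ε : ℝ => Real.pi * ((1 - ε) * √(1 - x ^ 2))) (nhdsWithin 0 (Ioi 0))
          (nhds (Real.pi * √(1 - x ^ 2))) := by
        have hc : ContinuousAt (fun ε : ℝ => Real.pi * ((1 - ε) * √(1 - x ^ 2))) 0 := by fun_prop
        have := hc.tendsto
        simp only [sub_zero, one_mul] at this
        exact this.mono_left nhdsWithin_le_nhds
      refine this.congr' ?_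
      filter_upwards [hev] with ε hε
      have e := (parts2 (f := fun _ => 1) (integrable_const _) hx hε).2
      simp only [mul_one, Complex.ofReal_one, one_mul] at e
      rw [← e, cal2 (zz_norm hx hε)]
      simp [zz]
    · refine LP0_of_le (C := |g x|) lwg (LP0_cont hwc) (hwg.sub (integrable_const _))
        (hwi.sub (integrable_const _)) fun t => ?_
      rw [← abs_mul]
      calc _ = |(√(1 - t ^ 2) * g t - √(1 - x ^ 2) * g x) - (g x * (√(1 - t ^ 2) - √(1 - x ^ 2)))| := by
            congr 1; ring
        _ ≤ _ := abs_sub _ _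
  constructor
  · refine trunc_eq (Y := fun _ => -x) hx measurable_const
      (fun t _ => by rw [abs_neg]; exact (abs_lt.2 hx).le) hwg lwg ?_
    have l3 := l1.neg
    rw [show √(1 - x ^ 2) * h x * Real.pi = Real.pi * (√(1 - x ^ 2) * h x) by ring] at l3
    refine l3.congr' ?_
    filter_upwards [hev] with ε hε
    have := congrArg Complex.re (hst _ (zz_norm hx hε))
    rw [(parts1 hh hx hε).1, (parts2 hgi hx hε).1] at this
    rw [this, neg_neg]
  · refine trunc_eq (Y := fun t => t) hx measurable_id
      (fun t ht => (abs_lt.2 ht).le) hh lh ?_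
    have l3 := l2.const_mul (√(1 - x ^ 2))⁻¹
    rw [show (√(1 - x ^ 2))⁻¹ * (g x * (Real.pi * √(1 - x ^ 2))) = Real.pi * g x by field_simp] at l3
    refine l3.congr' ?_
    filter_upwards [hev] with ε hε
    have := congrArg Complex.im (hst _ (zz_norm hx hε))
    rw [(parts1 hh hx hε).2, (parts2 hgi hx hε).2] at this
    rw [← this, inv_mul_cancel_left₀ hw0.ne']

end HS

namespace HS

lemma tr_set (f : ℝ → ℂ) (x ε : ℝ) :
    ∫ t in {t : ℝ | t ∈ Set.Ioo (-1 : ℝ) 1 ∧ ε ≤ |t - x|}, f t / ((t : ℂ) - (x : ℂ)) =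
      ∫ t, (tr x ε t : ℂ) * f t ∂νI := by
  have hm : MeasurableSet {t : ℝ | ε ≤ |t - x|} :=
    measurableSet_le measurable_const (by fun_prop)
  have e : {t : ℝ | t ∈ Set.Ioo (-1 : ℝ) 1 ∧ ε ≤ |t - x|} = {t : ℝ | ε ≤ |t - x|} ∩ Ioo (-1) 1 := by
    ext t; simp only [mem_ofPred_eq, mem_inter_iff]; exact and_comm
  rw [e, ← Measure.restrict_restrict hm, ← integral_indicator hm]
  refine integral_congr_ae (Eventually.of_forall fun t => ?_)
  by_cases h : ε ≤ |t - x|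
  · rw [indicator_of_mem (show t ∈ {t : ℝ | ε ≤ |t - x|} from h)]
    simp only [tr, if_pos h]; push_cast; ring
  · rw [indicator_of_notMem (show t ∉ {t : ℝ | ε ≤ |t - x|} from h)]
    simp only [tr, if_neg h]; simp

lemma FHT_eq {f : ℝ → ℂ} {u v : ℝ → ℝ} {x a b : ℝ} (hx : x ∈ Ioo (-1:ℝ) 1)
    (hu : Integrable u νI) (hv : Integrable v νI)
    (hf : ∀ᵐ t ∂νI, f t = (u t : ℂ) + (v t : ℂ) * Complex.I)
    (ha : Tendsto (fun ε => ∫ t, tr x ε t * u t ∂νI) (nhdsWithin 0 (Ioi 0)) (nhds (Real.pi * a)))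
    (hb : Tendsto (fun ε => ∫ t, tr x ε t * v t ∂νI) (nhdsWithin 0 (Ioi 0)) (nhds (Real.pi * b))) :
    FHT f x = (a : ℂ) + (b : ℂ) * Complex.I := by
  unfold FHT
  refine Tendsto.limUnder_eq ?_
  have hev : ∀ᶠ ε in nhdsWithin (0:ℝ) (Ioi 0), ε ∈ Ioc (0:ℝ) (1/2) := Ioc_mem_nhdsGT (by norm_num)
  have ha' := (Complex.continuous_ofReal.tendsto _).comp ha
  have hb' := (Complex.continuous_ofReal.tendsto _).comp hb
  have h1 := (ha'.add (hb'.mul_const Complex.I)).const_mul ((Real.pi : ℂ)⁻¹)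
  have hpi : (Real.pi : ℂ) ≠ 0 := by exact_mod_cast Real.pi_ne_zero
  have e : (Real.pi : ℂ)⁻¹ * (((Real.pi * a : ℝ) : ℂ) + ((Real.pi * b : ℝ) : ℂ) * Complex.I) =
      (a : ℂ) + (b : ℂ) * Complex.I := by
    push_cast; field_simp
  rw [e] at h1
  refine h1.congr' ?_
  filter_upwards [hev] with ε hε
  rw [tr_set]
  congr 1
  have iu := (Kc_int (Y := fun t => t) hx hε measurable_id (fun t ht => (abs_lt.2 ht).le) hu).2
  have iv := (Kc_int (Y := fun t => t) hx hε measurable_id (fun t ht => (abs_lt.2 ht).le) hv).2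
  have iu' : Integrable (fun t => ((tr x ε t * u t : ℝ) : ℂ)) νI := iu.ofReal
  have iv' : Integrable (fun t => ((tr x ε t * v t : ℝ) : ℂ)) νI := iv.ofReal
  simp only [Function.comp]
  rw [← integral_complex_ofReal, ← integral_complex_ofReal, ← integral_mul_const,
    ← integral_add iu' (iv'.mul_const _)]
  refine integral_congr_ae ?_
  filter_upwards [hf] with t ht
  rw [ht]; push_cast; ring

lemma part_ok {g : ℝ → ℂ} (hg : MemLlogL g) {p : ℂ → ℝ} (hp : Continuous p) (hle : ∀ z, |p z| ≤ ‖z‖) :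
    AEStronglyMeasurable (fun t => p (g t)) νI ∧
    Integrable (fun t => |p (g t)| * Real.posLog |p (g t)|) νI := by
  obtain ⟨hm, hi⟩ := hg
  have hm' : AEStronglyMeasurable (fun t => p (g t)) νI := hp.comp_aestronglyMeasurable hm
  refine ⟨hm', ?_⟩
  have hi' : Integrable (fun x => ‖g x‖ * max (Real.log ‖g x‖) 0) νI := hi
  refine hi'.mono' (by simpa using phi_meas hm' 1) (Eventually.of_forall fun t => ?_)
  rw [Real.norm_of_nonneg (mul_nonneg (abs_nonneg _) Real.posLog_nonneg)]
  have h1 : Real.posLog |p (g t)| ≤ max (Real.log ‖g t‖) 0 := by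
    have := posLog_mono (abs_nonneg _) (hle (g t))
    rwa [Real.posLog_apply (x := ‖g t‖), max_comm] at this
  exact mul_le_mul (hle _) h1 Real.posLog_nonneg (norm_nonneg _)

end HS


/-- For `g ∈ L log L(-1,1)`: `T̂(g) ∈ L¹(-1,1)`, `T(T̂(g)) = g` a.e., and `∫ T̂(g) = 0`. -/
theorem hatT_section (g : ℝ → ℂ) (hg : MemLlogL g) :
    IntegrableOn (hatT g) (Set.Ioo (-1 : ℝ) 1) ∧
    (∀ᵐ x ∂μI, FHT (hatT g) x = g x) ∧
    ∫ x in Set.Ioo (-1 : ℝ) 1, hatT g x = 0 := by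
  obtain ⟨m1, p1⟩ := HS.part_ok hg Complex.continuous_re Complex.abs_re_le_norm
  obtain ⟨m2, p2⟩ := HS.part_ok hg Complex.continuous_im Complex.abs_im_le_norm
  obtain ⟨h1, ih1, z1, t1⟩ := HS.real_main m1 p1
  obtain ⟨h2, ih2, z2, t2⟩ := HS.real_main m2 p2
  have ig1 := HS.phi_int m1 p1
  have ig2 := HS.phi_int m2 p2
  have hh : ∀ᵐ x ∂HS.νI, hatT g x = (h1 x : ℂ) + (h2 x : ℂ) * Complex.I := by
    filter_upwards [t1, t2, ae_restrict_mem measurableSet_Ioo] with x c1 c2 hx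
    have hw : (√(1 - x ^ 2) : ℂ) ≠ 0 := by
      exact_mod_cast (Real.sqrt_pos.2 (by nlinarith [hx.1, hx.2] : 0 < 1 - x ^ 2)).ne'
    have e := HS.FHT_eq (f := fun t => (Real.sqrt (1 - t ^ 2) : ℂ) * g t)
      (a := -(√(1 - x ^ 2) * h1 x)) (b := -(√(1 - x ^ 2) * h2 x)) hx (HS.w_bdd_int ig1) (HS.w_bdd_int ig2)
      (Eventually.of_forall fun t => by
        conv_lhs => rw [← Complex.re_add_im (g t)]
        push_cast; ring)
      (by rw [mul_neg]; exact c1.1) (by rw [mul_neg]; exact c2.1)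
    rw [hatT, e]
    push_cast
    field_simp
    ring
  have io1 : Integrable (fun t => (h1 t : ℂ)) HS.νI := ih1.ofReal
  have io2 : Integrable (fun t => (h2 t : ℂ) * Complex.I) HS.νI := (ih2.ofReal (𝕜 := ℂ)).mul_const _
  refine ⟨(io1.add io2).congr (hh.mono fun x hx => hx.symm), ?_, ?_⟩
  · change ∀ᵐ x ∂HS.νI, FHT (hatT g) x = g x
    filter_upwards [t1, t2, ae_restrict_mem measurableSet_Ioo] with x c1 c2 hx
    rw [HS.FHT_eq hx ih1 ih2 hh c1.2 c2.2, Complex.re_add_im]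
  · have e : ∫ x in Set.Ioo (-1 : ℝ) 1, hatT g x = ∫ x, ((h1 x : ℂ) + (h2 x : ℂ) * Complex.I) ∂HS.νI :=
      integral_congr_ae hh
    rw [e, integral_add io1 io2, integral_mul_const, integral_complex_ofReal, integral_complex_ofReal, z1, z2]
    simp
end
end
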